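/- arXiv:2407.20226 — 4 statements merged into one kernel-verified Lean document; each statement's English description precedes it below -/
import Mathlib

section
/- Let G be a finite connected simple graph, let w : E(G) → ℝ be an injective weight function, and let T be a spanning tree of G. Then T is the unique spanning tree of G minimizing the total weight ∑_{e∈T} w(e) if and only if for every edge e ∈ E(T) and every edge e' ∈ E(G) \ E(T) such that e lies on the unique path in T between the two endpoints of e', one has w(e) < w(e'). -/
/-!
Edge exchanges drive both directions: if `e` lies on the path in a spanning tree `T` that joins
the endpoints of an edge `e'` of `G`, then `T - e + e'` is again a spanning tree, and its weight
compares with that of `T` as `w e'` compares with `w e`. Hence a unique minimum satisfies the cycle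
condition. Conversely, given the cycle condition for `T` and another spanning tree `T'`, pick
`e' ∈ T' \ T`: deleting `e'` splits `T'` into two parts, and the path in `T` joining the endpoints
of `e'` crosses between them along some `e ∈ T \ T'`. Then `T' - e' + e` is a spanning tree that is
lighter than `T'` and shares more edges with `T`, so induction on `#(T' \ T)` ends at `T`.
-/

open MeasureTheory SimpleGraph
open scoped Classical

noncomputable section

namespace RST

variable {V : Type*}

/-- The graph on `V` whose edge set is the finset `T`. -/
def spanGraph (T : Finset (Sym2 V)) : SimpleGraph V :=
  SimpleGraph.fromEdgeSet ↑T

/-- `T` is (the edge set of) a spanning tree of `G`: a connected acyclic subgraph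
containing all vertices. -/
def IsSpanningTree (G : SimpleGraph V) (T : Finset (Sym2 V)) : Prop :=
  ↑T ⊆ G.edgeSet ∧ (spanGraph T).Connected ∧ (spanGraph T).IsAcyclic

/-- Total weight `∑_{e ∈ T} w e` of the tree `T`. -/
def treeWeight (G : SimpleGraph V) [Fintype V] (w : G.edgeSet → ℝ) (T : Finset (Sym2 V)) : ℝ :=
  ∑ e : G.edgeSet, if (e : Sym2 V) ∈ T then w e else 0

/-- `e` lies on the (unique) path in the tree `T` joining the two endpoints of `e'`. -/
def OnTreePath (T : Finset (Sym2 V)) (e e' : Sym2 V) : Prop :=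
  ∀ (u v : V) (p : (spanGraph T).Walk u v), p.IsPath → e' = s(u, v) → e ∈ p.edges

section EdgeExchange

variable {G : SimpleGraph V} {e : Sym2 V} {x y : V}

lemma reachable_deleteEdges_left_or_right {a z : V} (b : V) (h : G.Reachable a z) :
    (G.deleteEdges {s(a, b)}).Reachable a z ∨ (G.deleteEdges {s(a, b)}).Reachable b z := by
  by_contra hz
  obtain ⟨p⟩ := h
  obtain ⟨d, -, hfst, hsnd⟩ := p.exists_boundary_dart
    {v | (G.deleteEdges {s(a, b)}).Reachable a v ∨ (G.deleteEdges {s(a, b)}).Reachable b v}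
    (.inl .rfl) hz
  have hne : s(d.fst, d.snd) ≠ s(a, b) := by
    intro h
    obtain ⟨-, h⟩ | ⟨-, h⟩ := Sym2.eq_iff.1 h
    · exact hsnd (.inr (h ▸ .rfl))
    · exact hsnd (.inl (h ▸ .rfl))
  have hadj : (G.deleteEdges {s(a, b)}).Adj d.fst d.snd := deleteEdges_adj.2 ⟨d.adj, hne⟩
  exact hsnd (hfst.imp (·.trans hadj.reachable) (·.trans hadj.reachable))

lemma reachable_or_reachable_of_not_reachable_deleteEdges (hG : G.Preconnected)
    (hxy : ¬ (G.deleteEdges {e}).Reachable x y) (z : V) :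
    (G.deleteEdges {e}).Reachable x z ∨ (G.deleteEdges {e}).Reachable y z := by
  induction e with | h a b =>
  have hside (v : V) := reachable_deleteEdges_left_or_right b (hG a v)
  rcases hside x with hx | hx <;> rcases hside y with hy | hy
  · exact absurd (hx.symm.trans hy) hxy
  · exact (hside z).imp hx.symm.trans hy.symm.trans
  · exact (hside z).symm.imp hx.symm.trans hy.symm.trans
  · exact absurd (hx.symm.trans hy) hxy

lemma connected_deleteEdges_sup_edge (hG : G.Preconnected)
    (hxy : ¬ (G.deleteEdges {e}).Reachable x y) : (G.deleteEdges {e} ⊔ edge x y).Connected := by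
  have hadj : (G.deleteEdges {e} ⊔ edge x y).Adj x y :=
    .inr ((edge_adj ..).2 ⟨.inl ⟨rfl, rfl⟩, fun h ↦ hxy (h ▸ .rfl)⟩)
  refine (connected_iff_exists_forall_reachable _).2 ⟨x, fun z ↦ ?_⟩
  rcases reachable_or_reachable_of_not_reachable_deleteEdges hG hxy z with hz | hz
  · exact hz.mono le_sup_left
  · exact hadj.reachable.trans (hz.mono le_sup_left)

lemma isTree_deleteEdges_sup_edge (hG : G.IsTree) (hxy : ¬ (G.deleteEdges {e}).Reachable x y) :
    (G.deleteEdges {e} ⊔ edge x y).IsTree where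
  connected := connected_deleteEdges_sup_edge hG.connected.preconnected hxy
  isAcyclic := (hG.isAcyclic.anti (deleteEdges_le _)).sup_edge_of_not_reachable hxy

end EdgeExchange

section SpanGraph

variable {T : Finset (Sym2 V)} {e : Sym2 V} {u v : V}

lemma spanGraph_erase (T : Finset (Sym2 V)) (e : Sym2 V) :
    spanGraph (T.erase e) = (spanGraph T).deleteEdges {e} := by
  simp [spanGraph]

lemma spanGraph_insert (T : Finset (Sym2 V)) (x y : V) :
    spanGraph (insert s(x, y) T) = spanGraph T ⊔ edge x y := by
  rw [spanGraph, spanGraph, edge, ← fromEdgeSet_union, Finset.coe_insert, Set.insert_eq,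
    Set.union_comm]

lemma onTreePath_iff_not_reachable_deleteEdges :
    OnTreePath T e s(u, v) ↔ ¬ ((spanGraph T).deleteEdges {e}).Reachable u v := by
  constructor
  · intro he huv
    obtain ⟨p, hp⟩ := huv.exists_isPath
    have hmem := he u v (p.mapLe (deleteEdges_le _)) (hp.mapLe _) rfl
    rw [Walk.edges_mapLe_eq_edges] at hmem
    simpa using p.edges_subset_edgeSet hmem
  · intro he x y p _ hxy
    refine p.mem_edges_of_not_reachable_deleteEdges fun hr ↦ he ?_
    obtain ⟨rfl, rfl⟩ | ⟨rfl, rfl⟩ := Sym2.eq_iff.1 hxy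
    · exact hr
    · exact hr.symm

lemma onTreePath_of_mem_edges (hT : (spanGraph T).IsAcyclic) {p : (spanGraph T).Walk u v}
    (hp : p.IsPath) (he : e ∈ p.edges) : OnTreePath T e s(u, v) := by
  rw [onTreePath_iff_not_reachable_deleteEdges]
  intro huv
  obtain ⟨q, hq⟩ := huv.exists_isPath
  have hpq : p = q.mapLe (deleteEdges_le _) :=
    congrArg Subtype.val ((hT.subsingleton_path u v).elim ⟨p, hp⟩ ⟨_, hq.mapLe _⟩)
  rw [hpq, Walk.edges_mapLe_eq_edges] at he
  simpa using q.edges_subset_edgeSet he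

end SpanGraph

namespace IsSpanningTree

variable {G : SimpleGraph V} {S T : Finset (Sym2 V)} {e f : Sym2 V}

lemma isTree (hT : IsSpanningTree G T) : (spanGraph T).IsTree :=
  ⟨hT.2.1, hT.2.2⟩

lemma edgeSet_spanGraph (hT : IsSpanningTree G T) : (spanGraph T).edgeSet = T := by
  rw [spanGraph, edgeSet_fromEdgeSet, sdiff_eq_left, ← Set.subset_compl_iff_disjoint_right]
  exact hT.1.trans G.edgeSet_subset_compl_diagSet

lemma mem_edgeSet_spanGraph (hT : IsSpanningTree G T) : e ∈ (spanGraph T).edgeSet ↔ e ∈ T := by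
  rw [hT.edgeSet_spanGraph, Finset.mem_coe]

lemma eq_of_subset (hS : IsSpanningTree G S) (hT : IsSpanningTree G T) (hST : S ⊆ T) : S = T := by
  have hle : spanGraph S ≤ spanGraph T := fromEdgeSet_mono hST
  have heq := (isTree_iff_minimal_connected.1 hT.isTree).eq_of_le hS.2.1 hle
  rw [← Finset.coe_inj, ← hS.edgeSet_spanGraph, ← hT.edgeSet_spanGraph, heq]

lemma insert_erase (hT : IsSpanningTree G T) (hf : f ∈ G.edgeSet) (hef : OnTreePath T e f) :
    IsSpanningTree G (insert f (T.erase e)) := by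
  induction f with | h x y =>
  have htree : (spanGraph (insert s(x, y) (T.erase e))).IsTree := by
    rw [spanGraph_insert, spanGraph_erase]
    exact isTree_deleteEdges_sup_edge hT.isTree (onTreePath_iff_not_reachable_deleteEdges.1 hef)
  refine ⟨?_, htree.connected, htree.isAcyclic⟩
  rw [Finset.coe_insert, Set.insert_subset_iff]
  exact ⟨hf, (Finset.coe_subset.2 (T.erase_subset e)).trans hT.1⟩

lemma exists_exchange (hS : IsSpanningTree G S) (hT : IsSpanningTree G T) (hfS : f ∈ S)
    (hfT : f ∉ T) : ∃ e ∈ T, e ∉ S ∧ OnTreePath T e f ∧ OnTreePath S f e := by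
  induction f with | h u v =>
  have hbridge : ¬ ((spanGraph S).deleteEdges {s(u, v)}).Reachable u v :=
    isBridge_iff.1 (isAcyclic_iff_forall_isBridge.1 hS.2.2 (hS.mem_edgeSet_spanGraph.2 hfS))
  obtain ⟨p, hp⟩ := hT.2.1.exists_isPath u v
  obtain ⟨d, hdp, hfst, hsnd⟩ := p.exists_boundary_dart
    {z | ((spanGraph S).deleteEdges {s(u, v)}).Reachable u z} .rfl hbridge
  have hcross : ¬ ((spanGraph S).deleteEdges {s(u, v)}).Reachable d.fst d.snd :=
    fun h ↦ hsnd (hfst.trans h)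
  have hdT : d.edge ∈ T := hT.mem_edgeSet_spanGraph.1 d.edge_mem
  have hdS : d.edge ∉ S := by
    intro hd
    have hne : d.edge ≠ s(u, v) := fun h ↦ hfT (h ▸ hdT)
    have hadj : ((spanGraph S).deleteEdges {s(u, v)}).Adj d.fst d.snd :=
      deleteEdges_adj.2 ⟨hS.mem_edgeSet_spanGraph.2 hd, hne⟩
    exact hcross hadj.reachable
  exact ⟨d.edge, hdT, hdS, onTreePath_of_mem_edges hT.2.2 hp (List.mem_map_of_mem hdp),
    onTreePath_iff_not_reachable_deleteEdges.2 hcross⟩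

end IsSpanningTree

section Weight

variable {G : SimpleGraph V} {M : Type*} [AddCommMonoid M] {T : Finset (Sym2 V)} {e f : G.edgeSet}

/-- The total weight of the edges of `G` in `T`, with weights in any additive commutative monoid.
The sum runs over the finset `T` rather than over all edges of `G`, so that it makes sense for
infinite `G`; elements of `T` that are not edges of `G` contribute nothing. -/
def totalWeight (w : G.edgeSet → M) (T : Finset (Sym2 V)) : M :=
  ∑ e ∈ T.subtype (· ∈ G.edgeSet), w e

lemma totalWeight_eq_treeWeight [Fintype V] (w : G.edgeSet → ℝ) (T : Finset (Sym2 V)) :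
    totalWeight w T = treeWeight G w T := by
  rw [totalWeight, treeWeight, ← Finset.sum_filter]
  congr 1
  ext e
  simp

lemma totalWeight_insert_erase_add (w : G.edgeSet → M) (he : (e : Sym2 V) ∈ T)
    (hf : (f : Sym2 V) ∉ T) :
    totalWeight w (insert (f : Sym2 V) (T.erase e)) + w e = totalWeight w T + w f := by
  have hsub : (insert (f : Sym2 V) (T.erase e)).subtype (· ∈ G.edgeSet) =
      insert f ((T.subtype (· ∈ G.edgeSet)).erase e) := by
    ext
    simp [Subtype.ext_iff]
  have hf' : f ∉ (T.subtype (· ∈ G.edgeSet)).erase e := by simp [hf]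
  have he' : e ∈ T.subtype (· ∈ G.edgeSet) := by simpa using he
  rw [totalWeight, totalWeight, hsub, Finset.sum_insert hf', add_assoc,
    Finset.sum_erase_add _ _ he', add_comm]

/-- Every edge of `T` is lighter than each edge of `G` outside `T` whose endpoints it separates
in `T`: the condition characterizing the unique minimum spanning tree. -/
def CycleCondition {M : Type*} [LT M] (w : G.edgeSet → M) (T : Finset (Sym2 V)) : Prop :=
  ∀ e f : G.edgeSet, (e : Sym2 V) ∈ T → (f : Sym2 V) ∉ T →
    OnTreePath T (e : Sym2 V) (f : Sym2 V) → w e < w f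

variable [PartialOrder M] [IsOrderedCancelAddMonoid M] {w : G.edgeSet → M}

lemma totalWeight_lt_insert_erase_iff (he : (e : Sym2 V) ∈ T) (hf : (f : Sym2 V) ∉ T) :
    totalWeight w T < totalWeight w (insert (f : Sym2 V) (T.erase e)) ↔ w e < w f := by
  rw [← add_lt_add_iff_right (w e), totalWeight_insert_erase_add w he hf, add_lt_add_iff_left]

lemma totalWeight_insert_erase_lt_iff (he : (e : Sym2 V) ∈ T) (hf : (f : Sym2 V) ∉ T) :
    totalWeight w (insert (f : Sym2 V) (T.erase e)) < totalWeight w T ↔ w f < w e := by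
  rw [← add_lt_add_iff_right (w e), totalWeight_insert_erase_add w he hf, add_lt_add_iff_left]

lemma exists_totalWeight_lt_and_card_sdiff_lt {S : Finset (Sym2 V)} (hT : IsSpanningTree G T)
    (hcycle : CycleCondition w T) (hS : IsSpanningTree G S) (hne : S ≠ T) :
    ∃ S', IsSpanningTree G S' ∧ totalWeight w S' < totalWeight w S ∧
      (S' \ T).card < (S \ T).card := by
  obtain ⟨f, hfS, hfT⟩ := Finset.not_subset.1 (mt (hS.eq_of_subset hT) hne)
  obtain ⟨e, heT, heS, hef, hfe⟩ := hS.exists_exchange hT hfS hfT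
  lift e to G.edgeSet using hT.1 heT
  lift f to G.edgeSet using hS.1 hfS
  refine ⟨insert (e : Sym2 V) (S.erase f), hS.insert_erase e.2 hfe,
    (totalWeight_insert_erase_lt_iff hfS heS).2 (hcycle e f heT hfT hef), ?_⟩
  rw [Finset.insert_sdiff_of_mem _ heT, Finset.erase_sdiff_comm]
  exact Finset.card_erase_lt_of_mem (Finset.mem_sdiff.2 ⟨hfS, hfT⟩)

lemma totalWeight_lt_of_cycleCondition {S : Finset (Sym2 V)} (hT : IsSpanningTree G T)
    (hcycle : CycleCondition w T) (hS : IsSpanningTree G S) (hne : S ≠ T) :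
    totalWeight w T < totalWeight w S := by
  induction hn : (S \ T).card using Nat.strong_induction_on generalizing S with | _ n ih =>
  obtain ⟨S', hS', hlt, hcard⟩ := exists_totalWeight_lt_and_card_sdiff_lt hT hcycle hS hne
  obtain rfl | hne' := eq_or_ne S' T
  · exact hlt
  · exact (ih _ (hn ▸ hcard) hS' hne' rfl).trans hlt

theorem unique_mst_iff_cycle_condition_general (w : G.edgeSet → M) (hT : IsSpanningTree G T) :
    (∀ T' : Finset (Sym2 V), IsSpanningTree G T' → T' ≠ T → totalWeight w T < totalWeight w T')
      ↔ CycleCondition w T := by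
  refine ⟨fun hmin e e' he he' hpath ↦ ?_,
    fun hcycle T' ↦ totalWeight_lt_of_cycleCondition hT hcycle⟩
  have hne : insert (e' : Sym2 V) (T.erase e) ≠ T :=
    fun h ↦ he' (h ▸ Finset.mem_insert_self ..)
  exact (totalWeight_lt_insert_erase_iff he he').1 (hmin _ (hT.insert_erase e'.2 hpath) hne)

end Weight

/-- A spanning tree `T` of a finite connected graph `G` is the unique minimum-weight
spanning tree for an injective weight function `w` if and only if for every tree edge `e`
and non-tree edge `e'` such that `e` lies on the unique path in `T` between the endpoints
of `e'`, one has `w e < w e'`. -/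
theorem unique_mst_iff_cycle_condition [Fintype V] (G : SimpleGraph V) (hG : G.Connected)
    (w : G.edgeSet → ℝ) (hw : Function.Injective w)
    (T : Finset (Sym2 V)) (hT : IsSpanningTree G T) :
    (∀ T' : Finset (Sym2 V), IsSpanningTree G T' → T' ≠ T →
        treeWeight G w T < treeWeight G w T')
      ↔ ∀ e e' : G.edgeSet, (e : Sym2 V) ∈ T → (e' : Sym2 V) ∉ T →
          OnTreePath T (e : Sym2 V) (e' : Sym2 V) → w e < w e' := by
  simpa only [totalWeight_eq_treeWeight, CycleCondition] using
    unique_mst_iff_cycle_condition_general w hT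

end RST
end
end

section
/- Let G be a finite connected simple graph and let F be a spanning forest of G (an acyclic subgraph containing all vertices of G) with k ≥ 1 edges. Then P_Kru(F;G) = ∑_{e ∈ E(F)} P_Kru(F∖e;G) / |∂(F∖e)|, where F∖e is the forest obtained from F by deleting the edge e. -/
open MeasureTheory SimpleGraph
open scoped Classical

noncomputable section

namespace RST

variable {V : Type*}

/-- The i.i.d. uniform-on-`[0,1]` product measure on weight vectors indexed by `E`. -/
def edgeUniform (E : Type*) [Fintype E] : Measure (E → ℝ) :=
  Measure.pi fun _ => (volume : Measure ℝ).restrict (Set.Icc (0 : ℝ) 1)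

/-- `∂F`: the set of edges of `G` that are not in `F` and join two distinct connected
components of the spanning subgraph with edge set `F`. -/
def boundary (G : SimpleGraph V) (F : Finset (Sym2 V)) : Set (Sym2 V) :=
  {e | e ∈ G.edgeSet ∧ e ∉ F ∧ ∀ u v : V, e = s(u, v) → ¬(spanGraph F).Reachable u v}

/-- `c` is the nested sequence of spanning forests produced by running Kruskal's algorithm
on `G` with the weights `w`: start from the empty forest and repeatedly add the
minimum-weight edge joining two distinct components. -/
def IsKruskalChain (G : SimpleGraph V) [Fintype V] (w : G.edgeSet → ℝ)
    (c : ℕ → Finset (Sym2 V)) : Prop :=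
  c 0 = ∅ ∧ ∀ k : ℕ,
    ((boundary G (c k)).Nonempty →
      ∃ e : G.edgeSet, (e : Sym2 V) ∈ boundary G (c k) ∧
        (∀ e' : G.edgeSet, (e' : Sym2 V) ∈ boundary G (c k) → w e ≤ w e') ∧
        c (k + 1) = insert (e : Sym2 V) (c k)) ∧
    (¬(boundary G (c k)).Nonempty → c (k + 1) = c k)

/-- `P_Kru(F; G)`: the probability, for i.i.d. uniform `[0,1]` weights, that `F` is the
forest produced after `|F|` steps of Kruskal's algorithm on `G`. -/
def kruProb (G : SimpleGraph V) [Fintype V] (F : Finset (Sym2 V)) : ℝ :=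
  (edgeUniform G.edgeSet {w | ∃ c, IsKruskalChain G w c ∧ c F.card = F}).toReal

/-!
Kruskal's algorithm arrives at `F` exactly when, for some `e ∈ F`, it passes through `F \ e` and
`e` is a lightest edge of `∂(F \ e)`. If the weights are distinct, then at most one forest of each
size is reached, so these events are disjoint for distinct `e`.

For fixed `H`, the event that the algorithm passes through `H` and continues with `e` has the same
probability for all `e ∈ ∂H`: exchanging the weights of two edges of `∂H` does not affect the run up
to `H`, because both edges lie in the boundary of every earlier forest and neither was chosen there.
Hence each of these events has probability `P_Kru(H) / |∂H|`.
-/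

open Equiv Finset ProbabilityTheory

section Weights

variable {ι α : Type*} [MeasurableSpace α]

/-- A law of a random family indexed by `ι` is exchangeable if it is invariant under every
permutation of the indices. -/
def IsExchangeable (μ : Measure (ι → α)) : Prop :=
  ∀ σ : Perm ι, MeasurePreserving (fun w : ι → α => w ∘ σ) μ μ

lemma isExchangeable_pi [Fintype ι] (ν : Measure α) [SigmaFinite ν] :
    IsExchangeable (Measure.pi fun _ : ι => ν) := by
  intro σ
  have hσ : ⇑(MeasurableEquiv.piCongrLeft (fun _ : ι => α) σ.symm) = fun w => w ∘ σ := by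
    ext w i
    simpa using! piCongrLeft_apply_apply (fun _ : ι => α) σ.symm w (σ i)
  exact hσ ▸ measurePreserving_piCongrLeft (fun _ : ι => ν) σ.symm

lemma measure_prod_diagonal_eq_zero [MeasurableEq α] (μ ν : Measure α) [SFinite ν]
    [NullSingletonClass ν] : (μ.prod ν) (Set.diagonal α) = 0 := by
  have hfiber (x : α) : Prod.mk x ⁻¹' Set.diagonal α = {x} := by
    ext y
    simp [eq_comm]
  refine Measure.measure_prod_null_of_ae_null measurableSet_diagonal (.of_forall fun x => ?_)
  simp only [hfiber, measure_singleton, Pi.zero_apply]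

lemma ae_ne_of_indepFun [MeasurableEq α] {Ω : Type*} [MeasurableSpace Ω] {P : Measure Ω}
    [IsFiniteMeasure P] {X Y : Ω → α} (hX : AEMeasurable X P) (hY : AEMeasurable Y P)
    [NullSingletonClass (P.map Y)] (hXY : IndepFun X Y P) : ∀ᵐ ω ∂P, X ω ≠ Y ω := by
  have hdiag := measure_prod_diagonal_eq_zero (P.map X) (P.map Y)
  rw [← hXY.map_prod_eq_prod_map_map hX hY,
    Measure.map_apply_of_aemeasurable (hX.prodMk hY) measurableSet_diagonal] at hdiag
  simpa [ae_iff, Set.preimage] using hdiag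

lemma ae_injective_pi [Fintype ι] [MeasurableEq α] (ν : Measure α) [IsProbabilityMeasure ν]
    [NullSingletonClass ν] : ∀ᵐ w ∂Measure.pi (fun _ : ι => ν), Function.Injective w := by
  have ae_ne (a b : ι) (hab : a ≠ b) : ∀ᵐ w ∂Measure.pi (fun _ : ι => ν), w a ≠ w b := by
    have hindep : iIndepFun (fun (i : ι) w => w i) (Measure.pi fun _ : ι => ν) :=
      iIndepFun_pi (X := fun _ => id) fun _ => aemeasurable_id
    have : NullSingletonClass ((Measure.pi fun _ : ι => ν).map fun w => w b) :=
      (measurePreserving_eval (fun _ : ι => ν) b).map_eq.symm ▸ ‹_›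
    exact ae_ne_of_indepFun (measurable_pi_apply a).aemeasurable
      (measurable_pi_apply b).aemeasurable (hindep.indepFun hab)
  have ae_pairwise_ne : ∀ᵐ w ∂Measure.pi (fun _ : ι => ν), ∀ a b, a ≠ b → w a ≠ w b := by
    simpa only [ae_all_iff] using ae_ne
  filter_upwards [ae_pairwise_ne] with w hw a b
  exact not_imp_not.1 (hw a b)

lemma isExchangeable_edgeUniform [Fintype ι] : IsExchangeable (edgeUniform ι) :=
  isExchangeable_pi _

lemma ae_injective_edgeUniform [Fintype ι] :
    ∀ᵐ w ∂edgeUniform ι, Function.Injective w :=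
  have : IsProbabilityMeasure ((volume : Measure ℝ).restrict (Set.Icc 0 1)) := ⟨by simp⟩
  ae_injective_pi _

instance [Fintype ι] : IsFiniteMeasure (edgeUniform ι) := by
  unfold edgeUniform
  infer_instance

end Weights

section Boundary

variable {G : SimpleGraph V} {F H : Finset (Sym2 V)}

lemma boundary_anti (h : H ⊆ F) : boundary G F ⊆ boundary G H :=
  fun _ he => ⟨he.1, fun heH => he.2.1 (h heH), fun u v huv hr =>
    he.2.2 u v huv (hr.mono (fromEdgeSet_mono (coe_subset.2 h)))⟩

lemma mem_boundary_erase (hF : (spanGraph F).IsAcyclic) {e : Sym2 V} (he : e ∈ F)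
    (heG : e ∈ G.edgeSet) : e ∈ boundary G (F.erase e) := by
  refine ⟨heG, notMem_erase _ _, ?_⟩
  rintro u v rfl
  have hadj : (spanGraph F).Adj u v := by simp [spanGraph, he, heG.ne]
  have hdelete : spanGraph (F.erase s(u, v)) = (spanGraph F).deleteEdges {s(u, v)} := by
    simp [spanGraph, deleteEdges_fromEdgeSet]
  rw [hdelete, ← isBridge_iff]
  exact isAcyclic_iff_forall_adj_isBridge.1 hF hadj

end Boundary

section Kruskal

variable {G : SimpleGraph V} {w : G.edgeSet → ℝ} {F H K : Finset (Sym2 V)} {a b e f : G.edgeSet}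

/-- `e` is an edge of minimum weight in `∂H`, that is, a legitimate next choice for Kruskal's
algorithm at the forest `H`; without ties it is the only one. -/
def IsMinBoundaryEdge (G : SimpleGraph V) (w : G.edgeSet → ℝ) (H : Finset (Sym2 V))
    (e : G.edgeSet) : Prop :=
  (e : Sym2 V) ∈ boundary G H ∧ ∀ e' : G.edgeSet, (e' : Sym2 V) ∈ boundary G H → w e ≤ w e'

/-- The strict steps of Kruskal's algorithm: `K` is `H` with a lightest edge of `∂H` added. -/
def AddsMinBoundaryEdge (G : SimpleGraph V) (w : G.edgeSet → ℝ) (H K : Finset (Sym2 V)) : Prop :=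
  ∃ e, IsMinBoundaryEdge G w H e ∧ K = insert (e : Sym2 V) H

/-- The relation between consecutive terms of an `IsKruskalChain`, which becomes constant once
the boundary is empty. -/
def KruskalStep (G : SimpleGraph V) (w : G.edgeSet → ℝ) (H K : Finset (Sym2 V)) : Prop :=
  ((boundary G H).Nonempty → AddsMinBoundaryEdge G w H K) ∧ (¬(boundary G H).Nonempty → K = H)

/-- Kruskal's algorithm with weights `w` can pass through the forest `F`. Unlike in
`IsKruskalChain`, every step adds an edge, so that a run of the algorithm is a finite path. -/
def KruskalReaches (G : SimpleGraph V) (w : G.edgeSet → ℝ) (F : Finset (Sym2 V)) : Prop :=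
  Relation.ReflTransGen (AddsMinBoundaryEdge G w) ∅ F

lemma exists_isMinBoundaryEdge [Finite G.edgeSet] (w : G.edgeSet → ℝ)
    (hH : (boundary G H).Nonempty) : ∃ e, IsMinBoundaryEdge G w H e := by
  obtain ⟨x, hx⟩ := hH
  exact Set.exists_min_image {e : G.edgeSet | (e : Sym2 V) ∈ boundary G H} w (Set.toFinite _)
    ⟨⟨x, hx.1⟩, hx⟩

lemma IsMinBoundaryEdge.eq_of_injective (hw : Function.Injective w)
    (he : IsMinBoundaryEdge G w H e) (hf : IsMinBoundaryEdge G w H f) : e = f :=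
  hw (le_antisymm (he.2 f hf.1) (hf.2 e he.1))

lemma kruskalReaches_iff_exists_erase (hF : F.Nonempty) :
    KruskalReaches G w F ↔ ∃ e : G.edgeSet, (e : Sym2 V) ∈ F ∧
      KruskalReaches G w (F.erase e) ∧ IsMinBoundaryEdge G w (F.erase e) e := by
  constructor
  · intro h
    obtain rfl | ⟨H, hH, e, he, rfl⟩ := h.cases_tail
    · exact absurd rfl hF.ne_empty
    · refine ⟨e, mem_insert_self _ _, ?_⟩
      rw [erase_insert he.1.2.1]
      exact ⟨hH, he⟩
  · rintro ⟨e, heF, hreach, hmin⟩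
    exact hreach.tail ⟨e, hmin, (insert_erase heF).symm⟩

lemma KruskalReaches.eq_of_card_eq (hw : Function.Injective w) (hF : KruskalReaches G w F)
    (hK : KruskalReaches G w K) (hcard : F.card = K.card) : F = K := by
  induction hF generalizing K with
  | refl => exact (card_eq_zero.1 (hcard.symm.trans card_empty)).symm
  | @tail H _ _ hstep ih =>
    obtain ⟨e, he, rfl⟩ := hstep
    rw [card_insert_of_notMem he.1.2.1] at hcard
    obtain ⟨f, hfK, hreach, hf⟩ :=
      (kruskalReaches_iff_exists_erase (card_pos.1 (by omega))).1 hK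
    obtain rfl : H = K.erase f := ih hreach (by rw [card_erase_of_mem hfK]; omega)
    rw [he.eq_of_injective hw hf, insert_erase hfK]

lemma AddsMinBoundaryEdge.kruskalStep (h : AddsMinBoundaryEdge G w H K) : KruskalStep G w H K :=
  have ⟨e, he, _⟩ := h
  ⟨fun _ => h, absurd ⟨e, he.1⟩⟩

lemma exists_kruskalStep [Finite G.edgeSet] (w : G.edgeSet → ℝ) (H : Finset (Sym2 V)) :
    ∃ K, KruskalStep G w H K := by
  by_cases h : (boundary G H).Nonempty
  · obtain ⟨e, he⟩ := exists_isMinBoundaryEdge w h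
    exact ⟨_, AddsMinBoundaryEdge.kruskalStep ⟨e, he, rfl⟩⟩
  · exact ⟨H, fun h' => absurd h' h, fun _ => rfl⟩

lemma exists_seq_kruskalStep [Finite G.edgeSet] (w : G.edgeSet → ℝ) (H : Finset (Sym2 V)) :
    ∃ c : ℕ → Finset (Sym2 V), c 0 = H ∧ ∀ k, KruskalStep G w (c k) (c (k + 1)) := by
  choose s hs using exists_kruskalStep (G := G) w
  refine ⟨fun k => s^[k] H, rfl, fun k => ?_⟩
  simp only [Function.iterate_succ_apply']
  exact hs _

lemma exists_seq_kruskalStep_of_reflTransGen [Finite G.edgeSet]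
    (h : Relation.ReflTransGen (AddsMinBoundaryEdge G w) H F) :
    ∃ c : ℕ → Finset (Sym2 V), c 0 = H ∧ (∀ k, KruskalStep G w (c k) (c (k + 1))) ∧
      ∃ m, m + H.card = F.card ∧ c m = F := by
  induction h using Relation.ReflTransGen.head_induction_on with
  | refl =>
    obtain ⟨c, hc0, hc⟩ := exists_seq_kruskalStep w F
    exact ⟨c, hc0, hc, 0, zero_add _, hc0⟩
  | @head H K hHK _ ih =>
    obtain ⟨c, rfl, hc, m, hm, hcm⟩ := ih
    have hcard : (c 0).card = H.card + 1 := by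
      obtain ⟨e, he, hK⟩ := hHK
      rw [hK, card_insert_of_notMem he.1.2.1]
    refine ⟨fun k => k.casesOn H c, rfl, fun k => ?_, m + 1, by omega, hcm⟩
    cases k with
    | zero => exact hHK.kruskalStep
    | succ k => exact hc k

lemma isKruskalChain_iff [Fintype V] {c : ℕ → Finset (Sym2 V)} :
    IsKruskalChain G w c ↔ c 0 = ∅ ∧ ∀ k, KruskalStep G w (c k) (c (k + 1)) := by
  simp only [IsKruskalChain, KruskalStep, AddsMinBoundaryEdge, IsMinBoundaryEdge, and_assoc]

lemma IsKruskalChain.kruskalReaches [Fintype V] {c : ℕ → Finset (Sym2 V)}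
    (hc : IsKruskalChain G w c) (k : ℕ) : KruskalReaches G w (c k) := by
  obtain ⟨hc0, hstep⟩ := isKruskalChain_iff.1 hc
  induction k with
  | zero => exact hc0 ▸ .refl
  | succ k ih =>
    by_cases h : (boundary G (c k)).Nonempty
    · exact ih.tail ((hstep k).1 h)
    · exact (hstep k).2 h ▸ ih

lemma KruskalReaches.exists_isKruskalChain [Fintype V] (hF : KruskalReaches G w F) :
    ∃ c, IsKruskalChain G w c ∧ c F.card = F := by
  obtain ⟨c, hc0, hc, m, hm, hcm⟩ := exists_seq_kruskalStep_of_reflTransGen hF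
  obtain rfl : m = F.card := by simpa using hm
  exact ⟨c, isKruskalChain_iff.2 ⟨hc0, hc⟩, hcm⟩

lemma exists_isKruskalChain_iff_kruskalReaches [Fintype V] :
    (∃ c, IsKruskalChain G w c ∧ c F.card = F) ↔ KruskalReaches G w F :=
  ⟨fun ⟨_, hc, hcF⟩ => hcF ▸ hc.kruskalReaches _, KruskalReaches.exists_isKruskalChain⟩

lemma kruProb_eq_measureReal [Fintype V] (G : SimpleGraph V) (F : Finset (Sym2 V)) :
    kruProb G F = (edgeUniform G.edgeSet).real {w | KruskalReaches G w F} := by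
  simp only [kruProb, exists_isKruskalChain_iff_kruskalReaches, Measure.real]

lemma isMinBoundaryEdge_comp_perm_iff {σ : Perm G.edgeSet}
    (hσ : ∀ e, (σ e : Sym2 V) ∈ boundary G H ↔ (e : Sym2 V) ∈ boundary G H) :
    IsMinBoundaryEdge G (w ∘ σ) H e ↔ IsMinBoundaryEdge G w H (σ e) :=
  and_congr (hσ e).symm (σ.forall_congr fun e' => imp_congr (hσ e').symm .rfl)

lemma swap_mem_boundary_iff (ha : (a : Sym2 V) ∈ boundary G H) (hb : (b : Sym2 V) ∈ boundary G H)
    (e : G.edgeSet) : (swap a b e : Sym2 V) ∈ boundary G H ↔ (e : Sym2 V) ∈ boundary G H := by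
  rw [swap_apply_def]
  split_ifs with hea heb <;> simp [*]

lemma KruskalReaches.comp_swap (hH : KruskalReaches G w H) (ha : (a : Sym2 V) ∈ boundary G H)
    (hb : (b : Sym2 V) ∈ boundary G H) : KruskalReaches G (w ∘ swap a b) H := by
  induction hH with
  | refl => exact .refl
  | @tail K _ _ hstep ih =>
    obtain ⟨e, he, rfl⟩ := hstep
    have ha' := boundary_anti (subset_insert _ _) ha
    have hb' := boundary_anti (subset_insert _ _) hb
    have hea : e ≠ a := by
      rintro rfl
      exact ha.2.1 (mem_insert_self _ _)
    have heb : e ≠ b := by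
      rintro rfl
      exact hb.2.1 (mem_insert_self _ _)
    refine (ih ha' hb').tail ⟨e, ?_, rfl⟩
    rwa [isMinBoundaryEdge_comp_perm_iff (swap_mem_boundary_iff ha' hb'),
      swap_apply_of_ne_of_ne hea heb]

lemma kruskalReaches_comp_swap_iff (ha : (a : Sym2 V) ∈ boundary G H)
    (hb : (b : Sym2 V) ∈ boundary G H) :
    KruskalReaches G (w ∘ swap a b) H ↔ KruskalReaches G w H := by
  refine ⟨fun h => ?_, fun h => h.comp_swap ha hb⟩
  simpa [Function.comp_assoc, ← Perm.coe_mul] using h.comp_swap ha hb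

end Kruskal

section Probability

variable {G : SimpleGraph V} {F H K : Finset (Sym2 V)} {a b : G.edgeSet}
  {μ : Measure (G.edgeSet → ℝ)}

/-- The event that Kruskal's algorithm passes through `H` and may then add the edge `e`. -/
def kruskalStepEvent (G : SimpleGraph V) (H : Finset (Sym2 V)) (e : G.edgeSet) :
    Set (G.edgeSet → ℝ) :=
  {w | KruskalReaches G w H ∧ IsMinBoundaryEdge G w H e}

lemma setOfPred_kruskalReaches_eq_biUnion_erase (hF : F.Nonempty) :
    {w | KruskalReaches G w F} =
      ⋃ e ∈ F.subtype (· ∈ G.edgeSet), kruskalStepEvent G (F.erase e) e := by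
  ext w
  simp only [kruskalReaches_iff_exists_erase hF, kruskalStepEvent, Set.mem_iUnion, mem_subtype,
    Set.mem_ofPred_eq, exists_prop]

lemma setOfPred_kruskalReaches_eq_biUnion_boundary [Fintype G.edgeSet]
    (hH : (boundary G H).Nonempty) :
    {w | KruskalReaches G w H} =
      ⋃ e ∈ ({e | (e : Sym2 V) ∈ boundary G H} : Finset G.edgeSet), kruskalStepEvent G H e := by
  ext w
  simp only [kruskalStepEvent, Set.mem_iUnion, mem_filter_univ, Set.mem_ofPred_eq, exists_prop]
  refine ⟨fun hreach => ?_, fun ⟨_, _, hreach, _⟩ => hreach⟩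
  obtain ⟨e, he⟩ := exists_isMinBoundaryEdge w hH
  exact ⟨e, he.1, hreach, he⟩

lemma measurableSet_isMinBoundaryEdge [Finite G.edgeSet] (H : Finset (Sym2 V)) (e : G.edgeSet) :
    MeasurableSet {w | IsMinBoundaryEdge G w H e} := by
  have hle (e' : G.edgeSet) : MeasurableSet {w : G.edgeSet → ℝ | w e ≤ w e'} :=
    measurableSet_le (measurable_pi_apply e) (measurable_pi_apply e')
  exact measurableSet_setOfPred.2 <| measurable_const.and <| .forall fun e' =>
    measurable_const.imp (measurableSet_setOfPred.1 (hle e'))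

lemma measurableSet_kruskalReaches [Finite G.edgeSet] (F : Finset (Sym2 V)) :
    MeasurableSet {w | KruskalReaches G w F} := by
  induction F using Finset.strongInduction with
  | H F ih =>
    obtain rfl | hF := F.eq_empty_or_nonempty
    · simp [KruskalReaches, Relation.ReflTransGen.refl]
    · rw [setOfPred_kruskalReaches_eq_biUnion_erase hF]
      refine Finset.measurableSet_biUnion _ fun e he => ?_
      exact (ih _ (erase_ssubset (mem_subtype.1 he))).inter (measurableSet_isMinBoundaryEdge _ _)

lemma measurableSet_kruskalStepEvent [Finite G.edgeSet] (H : Finset (Sym2 V)) (e : G.edgeSet) :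
    MeasurableSet (kruskalStepEvent G H e) :=
  (measurableSet_kruskalReaches H).inter (measurableSet_isMinBoundaryEdge H e)

lemma eq_of_mem_kruskalStepEvent {w : G.edgeSet → ℝ} (hw : Function.Injective w)
    (hcard : H.card = K.card) (ha : w ∈ kruskalStepEvent G H a)
    (hb : w ∈ kruskalStepEvent G K b) : a = b := by
  obtain rfl := ha.1.eq_of_card_eq hw hb.1 hcard
  exact ha.2.eq_of_injective hw hb.2

lemma aedisjoint_kruskalStepEvent (hinj : ∀ᵐ w ∂μ, Function.Injective w)
    (hcard : H.card = K.card) (hab : a ≠ b) :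
    AEDisjoint μ (kruskalStepEvent G H a) (kruskalStepEvent G K b) :=
  measure_mono_null (fun _ hmem hw => hab (eq_of_mem_kruskalStepEvent hw hcard hmem.1 hmem.2))
    (ae_iff.1 hinj)

lemma measureReal_kruskalReaches_eq_sum_erase [Finite G.edgeSet] [IsFiniteMeasure μ]
    (hinj : ∀ᵐ w ∂μ, Function.Injective w) (hF : F.Nonempty) :
    μ.real {w | KruskalReaches G w F} =
      ∑ e ∈ F.subtype (· ∈ G.edgeSet), μ.real (kruskalStepEvent G (F.erase e) e) := by
  rw [setOfPred_kruskalReaches_eq_biUnion_erase hF, measureReal_biUnion_finset₀]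
  · intro e he f hf hef
    rw [mem_coe, mem_subtype] at he hf
    refine aedisjoint_kruskalStepEvent hinj ?_ hef
    rw [card_erase_of_mem he, card_erase_of_mem hf]
  · exact fun e _ => (measurableSet_kruskalStepEvent _ e).nullMeasurableSet

lemma preimage_comp_swap_kruskalStepEvent (ha : (a : Sym2 V) ∈ boundary G H)
    (hb : (b : Sym2 V) ∈ boundary G H) :
    (fun w => w ∘ swap a b) ⁻¹' kruskalStepEvent G H b = kruskalStepEvent G H a := by
  ext w
  simp only [kruskalStepEvent, Set.mem_preimage, Set.mem_ofPred_eq,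
    kruskalReaches_comp_swap_iff ha hb,
    isMinBoundaryEdge_comp_perm_iff (swap_mem_boundary_iff ha hb), swap_apply_right]

lemma measureReal_kruskalStepEvent_eq [Finite G.edgeSet] (hexch : IsExchangeable μ)
    (ha : (a : Sym2 V) ∈ boundary G H) (hb : (b : Sym2 V) ∈ boundary G H) :
    μ.real (kruskalStepEvent G H a) = μ.real (kruskalStepEvent G H b) := by
  rw [← preimage_comp_swap_kruskalStepEvent ha hb]
  exact (hexch (swap a b)).measureReal_preimage
    (measurableSet_kruskalStepEvent H b).nullMeasurableSet

lemma card_filter_mem_boundary [Fintype G.edgeSet] (H : Finset (Sym2 V)) :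
    ({e | (e : Sym2 V) ∈ boundary G H} : Finset G.edgeSet).card = (boundary G H).ncard := by
  rw [← Set.ncard_coe_finset, coe_filter_univ]
  exact Set.ncard_preimage_of_injective_subset_range Subtype.val_injective
    fun e he => ⟨⟨e, he.1⟩, rfl⟩

lemma measureReal_kruskalStepEvent [Finite G.edgeSet] [IsFiniteMeasure μ]
    (hexch : IsExchangeable μ) (hinj : ∀ᵐ w ∂μ, Function.Injective w)
    (ha : (a : Sym2 V) ∈ boundary G H) :
    μ.real (kruskalStepEvent G H a) =
      μ.real {w | KruskalReaches G w H} / (boundary G H).ncard := by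
  have := Fintype.ofFinite G.edgeSet
  have hncard : ((boundary G H).ncard : ℝ) ≠ 0 := by
    rw [← card_filter_mem_boundary, Nat.cast_ne_zero]
    exact card_ne_zero_of_mem (mem_filter_univ a |>.2 ha)
  rw [eq_div_iff hncard, setOfPred_kruskalReaches_eq_biUnion_boundary ⟨a, ha⟩,
    measureReal_biUnion_finset₀]
  · have hterm (e : G.edgeSet) (he : e ∈ ({e | (e : Sym2 V) ∈ boundary G H} : Finset G.edgeSet)) :
        μ.real (kruskalStepEvent G H e) = μ.real (kruskalStepEvent G H a) :=
      measureReal_kruskalStepEvent_eq hexch ((mem_filter_univ e).1 he) ha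
    rw [sum_congr rfl hterm, sum_const, card_filter_mem_boundary, nsmul_eq_mul, mul_comm]
  · exact fun e _ f _ hef => aedisjoint_kruskalStepEvent hinj rfl hef
  · exact fun e _ => (measurableSet_kruskalStepEvent H e).nullMeasurableSet

end Probability

theorem kruskal_induction_general {G : SimpleGraph V} [Finite G.edgeSet]
    {μ : Measure (G.edgeSet → ℝ)} [IsFiniteMeasure μ] (hexch : IsExchangeable μ)
    (hinj : ∀ᵐ w ∂μ, Function.Injective w) {F : Finset (Sym2 V)} (hFsub : ↑F ⊆ G.edgeSet)
    (hFforest : (spanGraph F).IsAcyclic) (hF : F.Nonempty) :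
    μ.real {w | KruskalReaches G w F} =
      ∑ e ∈ F, μ.real {w | KruskalReaches G w (F.erase e)} / (boundary G (F.erase e)).ncard :=
  calc
    _ = ∑ e ∈ F.subtype (· ∈ G.edgeSet), μ.real (kruskalStepEvent G (F.erase e) e) :=
      measureReal_kruskalReaches_eq_sum_erase hinj hF
    _ = ∑ e ∈ F.subtype (· ∈ G.edgeSet),
          μ.real {w | KruskalReaches G w (F.erase e)} / (boundary G (F.erase e)).ncard :=
      sum_congr rfl fun e he => measureReal_kruskalStepEvent hexch hinj <|
        mem_boundary_erase hFforest (mem_subtype.1 he) e.2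
    _ = _ := sum_subtype_of_mem (fun e : Sym2 V =>
        μ.real {w | KruskalReaches G w (F.erase e)} / (boundary G (F.erase e)).ncard) hFsub

/-- Kruskal induction: for a spanning forest `F` of a finite connected graph `G` with
at least one edge, `P_Kru(F) = ∑_{e ∈ F} P_Kru(F \ e) / |∂(F \ e)|`. -/
theorem kruskal_induction [Fintype V] (G : SimpleGraph V) (hG : G.Connected)
    (F : Finset (Sym2 V)) (hFsub : ↑F ⊆ G.edgeSet) (hFforest : (spanGraph F).IsAcyclic)
    (hk : 1 ≤ F.card) :
    kruProb G F = ∑ e ∈ F, kruProb G (F.erase e) / ((boundary G (F.erase e)).ncard : ℝ) := by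
  simpa only [kruProb_eq_measureReal] using kruskal_induction_general
    isExchangeable_edgeUniform ae_injective_edgeUniform hFsub hFforest (card_pos.1 hk)

end RST
end
end

section
/- Let G be a finite connected simple graph with n vertices and m edges, let T be a spanning tree of G, and let π = (e_1, …, e_{m−n+1}) be an ordering (bijection) of the edges of E(G) ∖ E(T). For e ∉ T let C_e be the edge set consisting of e together with the edges of the unique path in T between the endpoints of e, and let D_j = ⋃_{i=1}^{j} C_{e_i}. Let P_MST(T, π) be the μ_G-probability that T is the unique minimum-weight spanning tree and simultaneously w(e_1) < w(e_2) < ⋯ < w(e_{m−n+1}). Then P_MST(T, π) = ∏_{j=1}^{m−n+1} 1/|D_j|; consequently P_MST(T;G) = ∑_π ∏_{j=1}^{m−n+1} 1/|D_j(π)|, where the sum is over all orderings π of E(G)∖E(T). -/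
open MeasureTheory SimpleGraph
open scoped Classical

noncomputable section

namespace RST

variable {V : Type*}

/-- The event that `T` is the unique minimum-weight spanning tree of `G`. -/
def mstEvent (G : SimpleGraph V) [Fintype V] (T : Finset (Sym2 V)) : Set (G.edgeSet → ℝ) :=
  {w | IsSpanningTree G T ∧ ∀ T' : Finset (Sym2 V), IsSpanningTree G T' → T' ≠ T →
    treeWeight G w T < treeWeight G w T'}

/-- `P_MST(T; G)`: probability that `T` is the unique minimum-weight spanning tree. -/
def mstProb (G : SimpleGraph V) [Fintype V] (T : Finset (Sym2 V)) : ℝ :=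
  (edgeUniform G.edgeSet (mstEvent G T)).toReal

/-- The broken cycle `C_e` of `e ∉ T`: `e` together with the edges of the unique path
in the tree `T` between the two endpoints of `e`. -/
def brokenCycle (T : Finset (Sym2 V)) (e : Sym2 V) : Set (Sym2 V) :=
  insert e {f | ∀ (u v : V) (p : (spanGraph T).Walk u v), p.IsPath → e = s(u, v) →
    f ∈ p.edges}

/-- The event that the weights of the edges `π 0, π 1, …` occur in increasing order. -/
def orderEvent (G : SimpleGraph V) [Fintype V] {k : ℕ} (π : Fin k → Sym2 V) :
    Set (G.edgeSet → ℝ) :=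
  {w | ∀ (i j : Fin k) (e e' : G.edgeSet), i < j → (e : Sym2 V) = π i →
    (e' : Sym2 V) = π j → w e < w e'}

/-!
By the cycle property, `T` is the unique minimum spanning tree iff every edge `g ∉ T` is the
strictly heaviest edge of its broken cycle `C_g`. If moreover `w(e_1) < ⋯ < w(e_k)`, then `e_j`
outweighs all the cycles `C_{e_1}, …, C_{e_j}`; so the joint event says precisely that each `e_j`
is the strict maximum of `D_j`. The event that this holds for `e_1, …, e_{j-1}` is independent of
the maximal weight over any set containing `D_{j-1}`, in particular over `D_j ∖ {e_j}`, hence of the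
event that `e_j` beats that maximum, which has probability `1 / |D_j|` by symmetry. Finally the
weights are almost surely distinct, so exactly one ordering of the non-tree edges is increasing.
-/

section Exchange

variable {G H : SimpleGraph V} {T T' : Finset (Sym2 V)}

lemma reachable_deleteEdges_or_of_preconnected (hH : H.Preconnected) (x y z : V) :
    (H.deleteEdges {s(x, y)}).Reachable x z ∨ (H.deleteEdges {s(x, y)}).Reachable y z := by
  by_contra hz
  obtain ⟨p⟩ := hH x z
  obtain ⟨d, -, hfst, hsnd⟩ := p.exists_boundary_dart
    {v | (H.deleteEdges {s(x, y)}).Reachable x v ∨ (H.deleteEdges {s(x, y)}).Reachable y v}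
    (.inl .rfl) hz
  have hne : s(d.fst, d.snd) ≠ s(x, y) := by
    intro h
    rcases Sym2.mem_iff.mp (h ▸ Sym2.mem_mk_right d.fst d.snd) with h | h
    · exact hsnd (h ▸ .inl .rfl)
    · exact hsnd (h ▸ .inr .rfl)
  have hadj : (H.deleteEdges {s(x, y)}).Adj d.fst d.snd := deleteEdges_adj.mpr ⟨d.adj, hne⟩
  exact hsnd (hfst.imp (·.trans hadj.reachable) (·.trans hadj.reachable))

lemma connected_deleteEdges_sup_edge_s3 (hH : H.Connected) {e : Sym2 V} {u v : V}
    (huv : ¬ (H.deleteEdges {e}).Reachable u v) : (H.deleteEdges {e} ⊔ edge u v).Connected := by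
  induction e with | h x y
  have hside := reachable_deleteEdges_or_of_preconnected hH.preconnected x y
  set F := H.deleteEdges {s(x, y)}
  have hle : F ≤ F ⊔ edge u v := le_sup_left
  have hadj : (F ⊔ edge u v).Reachable u v :=
    Adj.reachable (.inr ((edge_adj ..).mpr ⟨.inl ⟨rfl, rfl⟩, fun h => huv (h ▸ .rfl)⟩))
  have hxy : (F ⊔ edge u v).Reachable x y := by
    rcases hside u with hu | hu <;> rcases hside v with hv | hv
    · exact absurd (hu.symm.trans hv) huv
    · exact (hu.mono hle).trans (hadj.trans (hv.mono hle).symm)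
    · exact (hv.mono hle).trans (hadj.symm.trans (hu.mono hle).symm)
    · exact absurd (hu.symm.trans hv) huv
  refine (connected_iff_exists_forall_reachable _).mpr ⟨x, fun z => ?_⟩
  exact (hside z).elim (·.mono hle) (fun hz => hxy.trans (hz.mono hle))

lemma spanGraph_insert_erase (T : Finset (Sym2 V)) (e : Sym2 V) (u v : V) :
    spanGraph (insert s(u, v) (T.erase e)) = (spanGraph T).deleteEdges {e} ⊔ edge u v := by
  rw [spanGraph, spanGraph, edge, deleteEdges_fromEdgeSet, ← fromEdgeSet_union,
    Finset.coe_insert, Finset.coe_erase, Set.union_singleton]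

lemma spanGraph_adj_iff (hT : ↑T ⊆ G.edgeSet) {u v : V} :
    (spanGraph T).Adj u v ↔ s(u, v) ∈ T :=
  (fromEdgeSet_adj _).trans (and_iff_left_of_imp fun h => (hT h : G.Adj u v).ne)

lemma isSpanningTree_insert_erase (hT : IsSpanningTree G T) {e : Sym2 V} {u v : V}
    (huvG : G.Adj u v) (huv : ¬ ((spanGraph T).deleteEdges {e}).Reachable u v) :
    IsSpanningTree G (insert s(u, v) (T.erase e)) := by
  obtain ⟨hsub, hconn, hacyc⟩ := hT
  refine ⟨?_, ?_, ?_⟩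
  · rw [Finset.coe_insert, Set.insert_subset_iff]
    exact ⟨huvG, (Finset.coe_subset.mpr (T.erase_subset e)).trans hsub⟩
  · rw [spanGraph_insert_erase]
    exact connected_deleteEdges_sup_edge_s3 hconn huv
  · rw [spanGraph_insert_erase]
    exact (hacyc.anti (deleteEdges_le _)).sup_edge_of_not_reachable huv

lemma mem_brokenCycle_self (T : Finset (Sym2 V)) (e : Sym2 V) : e ∈ brokenCycle T e :=
  Set.mem_insert _ _

lemma mem_brokenCycle_iff {a b : V} {f : Sym2 V} :
    f ∈ brokenCycle T s(a, b) ↔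
      f = s(a, b) ∨ ¬ ((spanGraph T).deleteEdges {f}).Reachable a b := by
  refine or_congr_right ⟨fun hf hreach => ?_, fun hf u v p _ huv => ?_⟩
  · induction f with | h x y
    obtain ⟨p, hp⟩ := reachable_deleteEdges_iff_exists_walk.mp hreach
    exact hp (p.edges_bypass_subset_edges (hf a b p.bypass p.bypass_isPath rfl))
  · refine p.mem_edges_of_not_reachable_deleteEdges fun h => hf ?_
    rcases Sym2.eq_iff.mp huv with ⟨rfl, rfl⟩ | ⟨rfl, rfl⟩
    exacts [h, h.symm]

lemma mem_brokenCycle_of_mem_edges (hT : (spanGraph T).IsAcyclic) {a b : V}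
    {p : (spanGraph T).Walk a b} (hp : p.IsPath) {f : Sym2 V} (hf : f ∈ p.edges) :
    f ∈ brokenCycle T s(a, b) := by
  induction f with | h x y
  refine mem_brokenCycle_iff.mpr (.inr fun hreach => ?_)
  obtain ⟨q, hq⟩ := reachable_deleteEdges_iff_exists_walk.mp hreach
  have hpq : q.bypass = p :=
    congrArg Subtype.val ((hT.subsingleton_path a b).elim ⟨_, q.bypass_isPath⟩ ⟨p, hp⟩)
  exact hq (q.edges_bypass_subset_edges (hpq ▸ hf))

lemma brokenCycle_subset_insert (hT : (spanGraph T).Preconnected) (e : Sym2 V) :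
    brokenCycle T e ⊆ insert e ↑T := by
  induction e with | h a b
  refine fun f hf => (mem_brokenCycle_iff.mp hf).imp_right fun hsep => ?_
  obtain ⟨p⟩ := hT a b
  have hfp := p.edges_subset_edgeSet (p.mem_edges_of_not_reachable_deleteEdges hsep)
  rw [spanGraph, edgeSet_fromEdgeSet] at hfp
  exact hfp.1

lemma isSpanningTree_insert_erase_of_mem_brokenCycle (hT : IsSpanningTree G T) {e f : Sym2 V}
    (he : e ∈ G.edgeSet) (hf : f ∈ brokenCycle T e) (hfe : f ≠ e) :
    IsSpanningTree G (insert e (T.erase f)) := by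
  induction e with | h a b
  exact isSpanningTree_insert_erase hT he ((mem_brokenCycle_iff.mp hf).resolve_left hfe)

lemma exists_mem_brokenCycle_isSpanningTree_insert_erase (hT : IsSpanningTree G T)
    (hT' : IsSpanningTree G T') {e : Sym2 V} (he : e ∈ T') (heT : e ∉ T) :
    ∃ f ∈ brokenCycle T e, f ∈ T ∧ f ∉ T' ∧ IsSpanningTree G (insert f (T'.erase e)) := by
  induction e with | h a b
  have hsep : ¬ ((spanGraph T').deleteEdges {s(a, b)}).Reachable a b :=
    isAcyclic_iff_forall_adj_isBridge.mp hT'.2.2 ((spanGraph_adj_iff hT'.1).mpr he)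
  obtain ⟨p, hp⟩ := hT.2.1.exists_isPath a b
  -- Some edge of the path in `T` must cross the cut of `T'` opened by deleting `s(a, b)`.
  obtain ⟨d, hd, hfst, hsnd⟩ := p.exists_boundary_dart
    {x | ((spanGraph T').deleteEdges {s(a, b)}).Reachable a x} .rfl hsep
  have hcross : ¬ ((spanGraph T').deleteEdges {s(a, b)}).Reachable d.fst d.snd :=
    fun h => hsnd (Reachable.trans hfst h)
  have hdT : s(d.fst, d.snd) ∈ T := (spanGraph_adj_iff hT.1).mp d.adj
  have hne : s(d.fst, d.snd) ≠ s(a, b) := ne_of_mem_of_not_mem hdT heT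
  refine ⟨s(d.fst, d.snd), ?_, hdT, fun hdT' => hcross ?_,
    isSpanningTree_insert_erase hT' (hT.1 hdT) hcross⟩
  · exact mem_brokenCycle_of_mem_edges hT.2.2 hp (List.mem_map_of_mem hd)
  · exact (deleteEdges_adj.mpr ⟨(spanGraph_adj_iff hT'.1).mpr hdT', hne⟩).reachable

end Exchange

section CycleProperty

variable [Fintype V] {G : SimpleGraph V} {T T' : Finset (Sym2 V)} {w : G.edgeSet → ℝ}

lemma treeWeight_insert (w : G.edgeSet → ℝ) {e : G.edgeSet} (he : (e : Sym2 V) ∉ T) :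
    treeWeight G w (insert (e : Sym2 V) T) = w e + treeWeight G w T := by
  have hsummand (x : G.edgeSet) : (if (x : Sym2 V) ∈ insert (e : Sym2 V) T then w x else 0)
      = (if x = e then w x else 0) + if (x : Sym2 V) ∈ T then w x else 0 := by
    by_cases hx : x = e
    · simp [hx, he]
    · simp [hx, Subtype.coe_injective.ne hx]
  simp only [treeWeight, hsummand, Finset.sum_add_distrib, Finset.sum_ite_eq', Finset.mem_univ,
    if_true]

lemma treeWeight_insert_erase (w : G.edgeSet → ℝ) {e f : G.edgeSet} (he : (e : Sym2 V) ∉ T)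
    (hf : (f : Sym2 V) ∈ T) :
    treeWeight G w (insert (e : Sym2 V) (T.erase f)) + w f = treeWeight G w T + w e := by
  have herase := treeWeight_insert w (Finset.notMem_erase (f : Sym2 V) T)
  rw [Finset.insert_erase hf] at herase
  rw [treeWeight_insert w (fun h => he (Finset.mem_of_mem_erase h)), herase]
  ring

/-- Kruskal's cycle condition: every edge outside `T` is the strictly heaviest one of its broken
cycle. -/
def CycleDominated (T : Finset (Sym2 V)) (w : G.edgeSet → ℝ) : Prop :=
  ∀ e f : G.edgeSet, (e : Sym2 V) ∉ T → (f : Sym2 V) ∈ brokenCycle T e → f ≠ e → w f < w e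

lemma exists_treeWeight_lt (hT : IsSpanningTree G T) (hw : CycleDominated T w)
    (hT' : IsSpanningTree G T') (hne : T' ≠ T) :
    ∃ T'', IsSpanningTree G T'' ∧ treeWeight G w T'' < treeWeight G w T' := by
  have hnot : ¬ T' ⊆ T := by
    intro hsub
    obtain ⟨e, heT, heT'⟩ := Finset.exists_of_ssubset (hsub.ssubset_of_ne hne)
    obtain ⟨f, -, hfT', hfT, -⟩ :=
      exists_mem_brokenCycle_isSpanningTree_insert_erase hT' hT heT heT'
    exact hfT (hsub hfT')
  obtain ⟨e, heT', heT⟩ := Finset.not_subset.mp hnot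
  obtain ⟨f, hf, hfT, hfT', htree⟩ :=
    exists_mem_brokenCycle_isSpanningTree_insert_erase hT hT' heT' heT
  have hfe : f ≠ e := ne_of_mem_of_not_mem hfT heT
  have hlt : w ⟨f, hT.1 hfT⟩ < w ⟨e, hT'.1 heT'⟩ :=
    hw ⟨e, hT'.1 heT'⟩ ⟨f, hT.1 hfT⟩ heT hf fun h => hfe (congrArg Subtype.val h)
  have hswap := treeWeight_insert_erase w (e := ⟨f, hT.1 hfT⟩) (f := ⟨e, hT'.1 heT'⟩) hfT' heT'
  exact ⟨_, htree, by linarith⟩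

lemma mem_mstEvent_iff_cycleDominated (hT : IsSpanningTree G T) :
    w ∈ mstEvent G T ↔ CycleDominated T w := by
  constructor
  · rintro ⟨-, hmin⟩ e f he hf hfe
    have hfe' : (f : Sym2 V) ≠ e := Subtype.coe_injective.ne hfe
    have hfT : (f : Sym2 V) ∈ T :=
      (brokenCycle_subset_insert hT.2.1.preconnected _ hf).resolve_left hfe'
    have hlt := hmin _ (isSpanningTree_insert_erase_of_mem_brokenCycle hT e.2 hf hfe')
      fun h => he (h ▸ Finset.mem_insert_self _ _)
    linarith [treeWeight_insert_erase w he hfT]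
  · refine fun hw => ⟨hT, fun T' hT' hne => ?_⟩
    by_contra! hle
    obtain ⟨S, ⟨hS, hSne, hSle⟩, hSmin⟩ := Set.exists_min_image
      {S | IsSpanningTree G S ∧ S ≠ T ∧ treeWeight G w S ≤ treeWeight G w T}
      (treeWeight G w) (Set.toFinite _) ⟨T', hT', hne, hle⟩
    obtain ⟨R, hR, hRlt⟩ := exists_treeWeight_lt hT hw hS hSne
    refine hRlt.not_ge (hSmin R ⟨hR, ?_, (hRlt.trans_le hSle).le⟩)
    rintro rfl
    exact hRlt.not_ge hSle

end CycleProperty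

section ProductMeasure

variable {ι : Type*} [Fintype ι]

lemma measurePreserving_update {X : ι → Type*} [∀ i, MeasurableSpace (X i)]
    (μ : ∀ i, Measure (X i)) [∀ i, IsProbabilityMeasure (μ i)] (i : ι) :
    MeasurePreserving (fun p : (∀ j, X j) × X i => Function.update p.1 i p.2)
      ((Measure.pi μ).prod (μ i)) (Measure.pi μ) := by
  refine ⟨measurable_update', (Measure.pi_eq fun s hs => ?_).symm⟩
  have hpre : (fun p : (∀ j, X j) × X i => Function.update p.1 i p.2) ⁻¹' Set.univ.pi s
      = Set.univ.pi (Function.update s i Set.univ) ×ˢ s i := by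
    ext ⟨w, x⟩
    simp only [Set.mem_preimage, Set.mem_prod, Set.mem_univ_pi, Function.forall_update_iff _
      (fun j y => y ∈ s j), Function.forall_update_iff _ (fun j (t : Set (X j)) => w j ∈ t),
      Set.mem_univ, true_and]
    exact and_comm
  rw [Measure.map_apply measurable_update' (.univ_pi hs), hpre, Measure.prod_prod, Measure.pi_pi,
    ← Finset.prod_erase_mul _ _ (Finset.mem_univ i), Function.update_self, measure_univ, mul_one,
    ← Finset.prod_erase_mul _ _ (Finset.mem_univ i)]
  congr 1
  exact Finset.prod_congr rfl fun j hj => by rw [Function.update_of_ne (Finset.ne_of_mem_erase hj)]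

lemma ae_injective_pi_s3 {X : Type*} [MeasurableSpace X] [MeasurableEq X] (μ : ι → Measure X)
    [∀ i, IsProbabilityMeasure (μ i)] [∀ i, NullSingletonClass (μ i)] :
    ∀ᵐ w ∂Measure.pi μ, Function.Injective w := by
  have hne (i j : ι) (hij : i ≠ j) : ∀ᵐ w ∂Measure.pi μ, w i ≠ w j := by
    have hmeas : MeasurableSet {w : ι → X | w i = w j} :=
      measurableSet_eq_fun (measurable_pi_apply i) (measurable_pi_apply j)
    have hnull : Measure.pi μ {w | w i = w j} = 0 := by
      rw [← (measurePreserving_update μ i).measure_preimage hmeas.nullMeasurableSet,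
        Measure.measure_prod_null (measurable_update' hmeas)]
      refine .of_forall fun w => ?_
      simp only [Set.preimage_ofPred_eq, Function.update_self, Function.update_of_ne hij.symm]
      exact measure_singleton (w j)
    exact measure_eq_zero_iff_ae_notMem.mp hnull
  have hall : ∀ᵐ w ∂Measure.pi μ, ∀ i j, i ≠ j → w i ≠ w j := by
    simpa only [ae_all_iff, Filter.eventually_imp_distrib_left] using hne
  filter_upwards [hall] with w hw i j hij
  by_contra h
  exact hw i j h hij

lemma sum_measureReal_inter_eq_of_ae_existsUnique {Ω : Type*} [MeasurableSpace Ω]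
    {μ : Measure Ω} [IsFiniteMeasure μ] {s : ι → Set Ω} (hs : ∀ i, MeasurableSet (s i))
    (huniq : ∀ᵐ ω ∂μ, ∃! i, ω ∈ s i) (A : Set Ω) : ∑ i, μ.real (A ∩ s i) = μ.real A := by
  have hdisj : Pairwise (Function.onFun (AEDisjoint (μ.restrict A)) s) := by
    intro i j hij
    refine measure_eq_zero_iff_ae_notMem.mpr (ae_restrict_of_ae ?_)
    filter_upwards [huniq] with ω hω hmem
    exact hij (hω.unique hmem.1 hmem.2)
  have hcover : (⋃ i, s i) =ᵐ[μ.restrict A] Set.univ := by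
    refine Filter.eventuallyEq_univ.mpr (ae_restrict_of_ae ?_)
    filter_upwards [huniq] with ω hω
    exact Set.mem_iUnion.mpr hω.exists
  calc ∑ i, μ.real (A ∩ s i) = ∑ i, (μ.restrict A).real (s i) := by
        simp only [measureReal_restrict_apply (hs _), Set.inter_comm]
    _ = (μ.restrict A).real (⋃ i, s i) := by
        rw [← measureReal_biUnion_finset₀ (fun i _ j _ hij => hdisj hij)
          fun i _ => (hs i).nullMeasurableSet]
        simp only [Finset.mem_univ, Set.iUnion_true]
    _ = μ.real A := by
        rw [measureReal_congr hcover, measureReal_restrict_apply .univ, Set.univ_inter]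

end ProductMeasure

section WeightEvents

variable {E : Type*}

/-- The event that all weights in `D` are below `t`, so `max_D w < t`. -/
def belowEvent (D : Finset E) (t : ℝ) : Set (E → ℝ) :=
  {w | ∀ f ∈ D, w f < t}

/-- The event that `e` is strictly heavier than every other edge of `D`. -/
def strictMaxEvent (D : Finset E) (e : E) : Set (E → ℝ) :=
  {w | ∀ f ∈ D, f ≠ e → w f < w e}

lemma measurableSet_belowEvent (D : Finset E) (t : ℝ) : MeasurableSet (belowEvent D t) := by
  simp only [belowEvent, Set.ofPred_forall]
  exact Finset.measurableSet_biInter _ fun f _ =>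
    measurableSet_lt (measurable_pi_apply f) measurable_const

lemma measurableSet_strictMaxEvent (D : Finset E) (e : E) :
    MeasurableSet (strictMaxEvent D e) := by
  simp only [strictMaxEvent, Set.ofPred_forall]
  exact Finset.measurableSet_biInter _ fun f _ => .iInter fun _ =>
    measurableSet_lt (measurable_pi_apply f) (measurable_pi_apply e)

lemma belowEvent_insert (D : Finset E) (e : E) (t : ℝ) :
    belowEvent (insert e D) t = belowEvent D t ∩ {w | w e < t} := by
  ext w
  simp only [belowEvent, Finset.forall_mem_insert, Set.mem_inter_iff, Set.mem_ofPred_eq, and_comm]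

lemma update_mem_belowEvent {D : Finset E} {e : E} (he : e ∉ D) {w : E → ℝ} {x t : ℝ} :
    Function.update w e x ∈ belowEvent D t ↔ w ∈ belowEvent D t :=
  forall₂_congr fun f hf => by rw [Function.update_of_ne (ne_of_mem_of_not_mem hf he)]

lemma update_mem_strictMaxEvent {D : Finset E} {e : E} {w : E → ℝ} {x : ℝ} :
    Function.update w e x ∈ strictMaxEvent D e ↔ w ∈ belowEvent (D.erase e) x := by
  simp only [strictMaxEvent, belowEvent, Set.mem_ofPred_eq, Function.update_self, Finset.mem_erase,
    and_imp]
  exact ⟨fun h f hfe hf => by simpa only [Function.update_of_ne hfe] using h f hf hfe,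
    fun h f hf hfe => by simpa only [Function.update_of_ne hfe] using h f hfe hf⟩

lemma strictMaxEvent_inter_belowEvent {D : Finset E} {e : E} (he : e ∈ D) (t : ℝ) :
    strictMaxEvent D e ∩ belowEvent D t = strictMaxEvent D e ∩ {w | w e < t} := by
  ext w
  refine and_congr_right fun hmax => ⟨fun h => h e he, fun h f hf => ?_⟩
  by_cases hfe : f = e
  · exact hfe ▸ h
  · exact (hmax f hf hfe).trans h

/-- The event that, for every `j`, the edge `e j` is the strict maximum of `D j`. -/
def recordEvent {k : ℕ} (D : Fin k → Finset E) (e : Fin k → E) : Set (E → ℝ) :=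
  {w | ∀ j, w ∈ strictMaxEvent (D j) (e j)}

lemma recordEvent_succ {k : ℕ} (D : Fin (k + 1) → Finset E) (e : Fin (k + 1) → E) :
    recordEvent D e = recordEvent (D ∘ Fin.castSucc) (e ∘ Fin.castSucc)
      ∩ strictMaxEvent (D (Fin.last k)) (e (Fin.last k)) :=
  Set.ext fun _ => Fin.forall_fin_succ'

end WeightEvents

section UniformWeights

variable {E : Type*} [Fintype E]

instance : IsProbabilityMeasure ((volume : Measure ℝ).restrict (Set.Icc 0 1)) :=
  ⟨by simp⟩

instance : IsProbabilityMeasure (edgeUniform E) :=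
  inferInstanceAs (IsProbabilityMeasure (Measure.pi _))

lemma measureReal_eq_integral_update {S : Set (E → ℝ)} (hS : MeasurableSet S) (e : E) :
    (edgeUniform E).real S
      = ∫ x in (0 : ℝ)..1, (edgeUniform E).real {w | Function.update w e x ∈ S} := by
  have hS' : MeasurableSet {p : (E → ℝ) × ℝ | Function.update p.1 e p.2 ∈ S} :=
    measurable_update' hS
  rw [intervalIntegral.integral_of_le zero_le_one, ← integral_Icc_eq_integral_Ioc]
  simp only [measureReal_def]
  refine .trans (congrArg ENNReal.toReal ?_)
    (integral_toReal (measurable_measure_prodMk_right hS').aemeasurable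
      (.of_forall fun _ => measure_lt_top _ _)).symm
  exact ((measurePreserving_update _ e).measure_preimage hS.nullMeasurableSet).symm.trans
    (Measure.prod_apply_symm hS')

lemma measureReal_inter_lt_eq_integral_update {S : Set (E → ℝ)} (hS : MeasurableSet S) (e : E)
    {t : ℝ} (ht : t ∈ Set.Icc (0 : ℝ) 1) :
    (edgeUniform E).real (S ∩ {w | w e < t})
      = ∫ x in (0 : ℝ)..t, (edgeUniform E).real {w | Function.update w e x ∈ S} := by
  have hsection (x : ℝ) :
      (edgeUniform E).real {w | Function.update w e x ∈ S ∩ {w | w e < t}}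
        = (Set.Iio t).indicator
            (fun x => (edgeUniform E).real {w | Function.update w e x ∈ S}) x := by
    by_cases hx : x < t <;> simp [hx]
  have hlt : MeasurableSet {w : E → ℝ | w e < t} :=
    measurableSet_lt (measurable_pi_apply e) measurable_const
  rw [measureReal_eq_integral_update (hS.inter hlt) e,
    intervalIntegral.integral_of_le zero_le_one, ← integral_Ico_eq_integral_Ioc]
  simp only [hsection]
  rw [setIntegral_indicator measurableSet_Iio, Set.Ico_inter_Iio, min_eq_right ht.2,
    intervalIntegral.integral_of_le ht.1, integral_Ico_eq_integral_Ioc]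

/-- The event `A` is determined by the weights in `D` and is independent of their maximum
(whose distribution function on `[0, 1]` is `t ↦ t ^ #D`). -/
structure IndepOfMax (A : Set (E → ℝ)) (D : Finset E) : Prop where
  measurableSet : MeasurableSet A
  dependsOn : DependsOn (fun w => w ∈ A) (D : Set E)
  measureReal_inter_belowEvent : ∀ t ∈ Set.Icc (0 : ℝ) 1,
    (edgeUniform E).real (A ∩ belowEvent D t) = t ^ D.card * (edgeUniform E).real A

namespace IndepOfMax

variable {A : Set (E → ℝ)} {D S : Finset E} {e : E}

lemma univ_empty : IndepOfMax (Set.univ : Set (E → ℝ)) ∅ where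
  measurableSet := .univ
  dependsOn _ _ _ := rfl
  measureReal_inter_belowEvent t _ := by simp [belowEvent]

lemma update_mem (hA : IndepOfMax A D) (he : e ∉ D) {w : E → ℝ} {x : ℝ} :
    Function.update w e x ∈ A ↔ w ∈ A :=
  (hA.dependsOn fun _ hf => Function.update_of_ne (ne_of_mem_of_not_mem hf he) x w).to_iff

lemma insert (hA : IndepOfMax A D) (he : e ∉ D) : IndepOfMax A (insert e D) where
  measurableSet := hA.measurableSet
  dependsOn := hA.dependsOn.mono (Finset.coe_subset.mpr (Finset.subset_insert e D))
  measureReal_inter_belowEvent t ht := by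
    have hsection (x : ℝ) :
        {w | Function.update w e x ∈ A ∩ belowEvent D t} = A ∩ belowEvent D t :=
      Set.ext fun w => and_congr (hA.update_mem he) (update_mem_belowEvent he)
    rw [belowEvent_insert, ← Set.inter_assoc, measureReal_inter_lt_eq_integral_update
      (hA.measurableSet.inter (measurableSet_belowEvent D t)) e ht]
    simp only [hsection, intervalIntegral.integral_const, smul_eq_mul, sub_zero,
      hA.measureReal_inter_belowEvent t ht, Finset.card_insert_of_notMem he]
    ring

lemma mono (hA : IndepOfMax A D) (hDS : D ⊆ S) : IndepOfMax A S := by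
  have hunion (R : Finset E) : IndepOfMax A (D ∪ R) := by
    induction R using Finset.induction with
    | empty => exact (Finset.union_empty D).symm ▸ hA
    | insert f R _ ih =>
      rw [Finset.union_insert]
      by_cases hf : f ∈ D ∪ R
      · exact (Finset.insert_eq_of_mem hf).symm ▸ ih
      · exact ih.insert hf
  exact Finset.union_eq_right.mpr hDS ▸ hunion S

lemma measureReal_inter_strictMaxEvent_inter_lt (hA : IndepOfMax A (D.erase e)) {t : ℝ}
    (ht : t ∈ Set.Icc (0 : ℝ) 1) :
    (edgeUniform E).real (A ∩ strictMaxEvent D e ∩ {w | w e < t})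
      = t ^ ((D.erase e).card + 1) / ((D.erase e).card + 1) * (edgeUniform E).real A := by
  have hsection (x : ℝ) : {w | Function.update w e x ∈ A ∩ strictMaxEvent D e}
      = A ∩ belowEvent (D.erase e) x :=
    Set.ext fun w =>
      and_congr (hA.update_mem (Finset.notMem_erase e D)) update_mem_strictMaxEvent
  rw [measureReal_inter_lt_eq_integral_update
    (hA.measurableSet.inter (measurableSet_strictMaxEvent D e)) e ht]
  calc ∫ x in (0 : ℝ)..t,
        (edgeUniform E).real {w | Function.update w e x ∈ A ∩ strictMaxEvent D e}
      = ∫ x in (0 : ℝ)..t, x ^ (D.erase e).card * (edgeUniform E).real A := by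
        refine intervalIntegral.integral_congr fun x hx => ?_
        rw [Set.uIcc_of_le ht.1] at hx
        simp only [hsection]
        exact hA.measureReal_inter_belowEvent x ⟨hx.1, hx.2.trans ht.2⟩
    _ = _ := by
        rw [intervalIntegral.integral_mul_const, integral_pow, zero_pow (Nat.succ_ne_zero _),
          sub_zero]

lemma measureReal_inter_strictMaxEvent (hA : IndepOfMax A (D.erase e)) (he : e ∈ D) :
    (edgeUniform E).real (A ∩ strictMaxEvent D e) = (edgeUniform E).real A * (1 / D.card) := by
  have hmeas := hA.measurableSet.inter (measurableSet_strictMaxEvent D e)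
  rw [measureReal_eq_integral_update hmeas e,
    ← measureReal_inter_lt_eq_integral_update hmeas e ⟨zero_le_one, le_rfl⟩,
    hA.measureReal_inter_strictMaxEvent_inter_lt ⟨zero_le_one, le_rfl⟩,
    ← Finset.card_erase_add_one he]
  push_cast
  ring

lemma inter_strictMaxEvent (hA : IndepOfMax A (D.erase e)) (he : e ∈ D) :
    IndepOfMax (A ∩ strictMaxEvent D e) D where
  measurableSet := hA.measurableSet.inter (measurableSet_strictMaxEvent D e)
  dependsOn w w' h := by
    refine congrArg₂ And (hA.dependsOn fun f hf => h f (Finset.mem_of_mem_erase hf)) ?_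
    exact propext (forall₂_congr fun f hf => by rw [h f hf, h e he])
  measureReal_inter_belowEvent t ht := by
    rw [Set.inter_assoc, strictMaxEvent_inter_belowEvent he, ← Set.inter_assoc,
      hA.measureReal_inter_strictMaxEvent_inter_lt ht, hA.measureReal_inter_strictMaxEvent he,
      ← Finset.card_erase_add_one he]
    push_cast
    ring

end IndepOfMax

lemma indepOfMax_recordEvent {k : ℕ} {D : Fin k → Finset E} {e : Fin k → E} (hD : Monotone D)
    (he : ∀ j, e j ∈ D j) (hnew : ∀ i j, i < j → e j ∉ D i) {S : Finset E} (hS : ∀ j, D j ⊆ S) :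
    IndepOfMax (recordEvent D e) S := by
  induction k generalizing S with
  | zero =>
    have huniv : recordEvent D e = Set.univ := Set.eq_univ_of_forall fun _ j => j.elim0
    exact huniv ▸ IndepOfMax.univ_empty.mono (Finset.empty_subset S)
  | succ k ih =>
    rw [recordEvent_succ]
    refine (IndepOfMax.inter_strictMaxEvent ?_ (he _)).mono (hS _)
    exact ih (hD.comp Fin.strictMono_castSucc.monotone) (fun j => he _)
      (fun i j hij => hnew _ _ hij) fun j =>
        Finset.subset_erase.mpr ⟨hD (Fin.le_last _), hnew _ _ (Fin.castSucc_lt_last j)⟩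

lemma measureReal_recordEvent {k : ℕ} {D : Fin k → Finset E} {e : Fin k → E} (hD : Monotone D)
    (he : ∀ j, e j ∈ D j) (hnew : ∀ i j, i < j → e j ∉ D i) :
    (edgeUniform E).real (recordEvent D e) = ∏ j, (1 / (D j).card : ℝ) := by
  induction k with
  | zero =>
    have huniv : recordEvent D e = Set.univ := Set.eq_univ_of_forall fun _ j => j.elim0
    simp [huniv]
  | succ k ih =>
    have hD' : Monotone (D ∘ Fin.castSucc) := hD.comp Fin.strictMono_castSucc.monotone
    have hnew' (i j : Fin k) (hij : i < j) : e j.castSucc ∉ D i.castSucc := hnew _ _ hij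
    have hindep : IndepOfMax (recordEvent (D ∘ Fin.castSucc) (e ∘ Fin.castSucc))
        ((D (Fin.last k)).erase (e (Fin.last k))) :=
      indepOfMax_recordEvent hD' (fun j => he _) hnew' fun j =>
        Finset.subset_erase.mpr ⟨hD (Fin.le_last _), hnew _ _ (Fin.castSucc_lt_last j)⟩
    rw [recordEvent_succ, hindep.measureReal_inter_strictMaxEvent (he _),
      ih (e := e ∘ Fin.castSucc) hD' (fun j => he _) hnew', Fin.prod_univ_castSucc]
    rfl

end UniformWeights

section Orderings

lemma existsUnique_equiv_strictMono_comp {α β : Type*} [Fintype α] [LinearOrder β] {g : α → β}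
    (hg : Function.Injective g) {k : ℕ} (hk : Fintype.card α = k) :
    ∃! π : Fin k ≃ α, StrictMono (g ∘ π) := by
  let _ : LinearOrder α := LinearOrder.lift' g hg
  refine ⟨(monoEquivOfFin α hk).toEquiv, (monoEquivOfFin α hk).strictMono, fun π hπ => ?_⟩
  have hiso : hπ.orderIsoOfSurjective π π.surjective = monoEquivOfFin α hk :=
    Subsingleton.elim _ _
  exact Equiv.ext fun i => congrArg (fun φ : Fin k ≃o α => φ i) hiso

variable [Fintype V] {G : SimpleGraph V} {T : Finset (Sym2 V)} {k : ℕ} {e : Fin k → G.edgeSet}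

lemma mem_orderEvent_iff {w : G.edgeSet → ℝ} :
    w ∈ orderEvent G (fun i => (e i : Sym2 V)) ↔ StrictMono (w ∘ e) := by
  refine ⟨fun h i j hij => h i j _ _ hij rfl rfl, fun h i j a b hij ha hb => ?_⟩
  rw [Subtype.coe_injective ha, Subtype.coe_injective hb]
  exact h hij

lemma measurableSet_orderEvent (e : Fin k → G.edgeSet) :
    MeasurableSet (orderEvent G fun i => (e i : Sym2 V)) := by
  have hinter : (orderEvent G fun i => (e i : Sym2 V))
      = ⋂ i, ⋂ j, ⋂ (_ : i < j), {w | w (e i) < w (e j)} := by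
    ext w
    simp only [mem_orderEvent_iff, StrictMono, Set.mem_iInter, Set.mem_ofPred_eq,
      Function.comp_apply]
  rw [hinter]
  exact .iInter fun i => .iInter fun j => .iInter fun _ =>
    measurableSet_lt (measurable_pi_apply _) (measurable_pi_apply _)

/-- The set `D_j` of edges lying on the broken cycle of one of `e 0, …, e j`, as a finset of edges
of `G`. -/
def cycleUnion (T : Finset (Sym2 V)) (e : Fin k → G.edgeSet) (j : Fin k) : Finset G.edgeSet :=
  {f | ∃ i ≤ j, (f : Sym2 V) ∈ brokenCycle T (e i)}

lemma mem_cycleUnion {f : G.edgeSet} {j : Fin k} :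
    f ∈ cycleUnion T e j ↔ ∃ i ≤ j, (f : Sym2 V) ∈ brokenCycle T (e i) := by
  simp only [cycleUnion, Finset.mem_filter_univ]

lemma mem_cycleUnion_self (T : Finset (Sym2 V)) (e : Fin k → G.edgeSet) (j : Fin k) :
    e j ∈ cycleUnion T e j :=
  mem_cycleUnion.mpr ⟨j, le_rfl, mem_brokenCycle_self T _⟩

lemma monotone_cycleUnion (T : Finset (Sym2 V)) (e : Fin k → G.edgeSet) :
    Monotone (cycleUnion T e) := by
  intro i j hij f hf
  obtain ⟨l, hl, hfl⟩ := mem_cycleUnion.mp hf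
  exact mem_cycleUnion.mpr ⟨l, hl.trans hij, hfl⟩

lemma card_cycleUnion (hT : IsSpanningTree G T) (e : Fin k → G.edgeSet) (j : Fin k) :
    (cycleUnion T e j).card = (⋃ i, ⋃ (_ : i ≤ j), brokenCycle T (e i : Sym2 V)).ncard := by
  have hcoe : (cycleUnion T e j : Set G.edgeSet)
      = Subtype.val ⁻¹' ⋃ i, ⋃ (_ : i ≤ j), brokenCycle T (e i : Sym2 V) := by
    ext f
    simp only [Finset.mem_coe, mem_cycleUnion, Set.mem_preimage, Set.mem_iUnion, exists_prop]
  rw [← Set.ncard_coe_finset, hcoe]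
  refine Set.ncard_preimage_of_injective_subset_range Subtype.coe_injective ?_
  rw [Subtype.range_coe]
  refine Set.iUnion₂_subset fun i _ => ?_
  exact (brokenCycle_subset_insert hT.2.1.preconnected _).trans
    (Set.insert_subset (e i).2 hT.1)

lemma notMem_cycleUnion_of_lt (hT : IsSpanningTree G T) (he : Function.Injective e)
    (heT : ∀ j, (e j : Sym2 V) ∉ T) (i j : Fin k) (hij : i < j) : e j ∉ cycleUnion T e i := by
  intro hmem
  obtain ⟨l, hl, hjl⟩ := mem_cycleUnion.mp hmem
  have hjl' : (e j : Sym2 V) = e l :=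
    (brokenCycle_subset_insert hT.2.1.preconnected _ hjl).resolve_right (heT j)
  exact (hl.trans_lt hij).ne' (he (Subtype.coe_injective hjl'))

lemma mstEvent_inter_orderEvent (hT : IsSpanningTree G T) (he : Function.Injective e)
    (heT : ∀ g : G.edgeSet, (g : Sym2 V) ∉ T ↔ g ∈ Set.range e) :
    mstEvent G T ∩ orderEvent G (fun i => (e i : Sym2 V)) = recordEvent (cycleUnion T e) e := by
  ext w
  rw [Set.mem_inter_iff, mem_mstEvent_iff_cycleDominated hT, mem_orderEvent_iff]
  constructor
  · rintro ⟨hcycle, horder⟩ j f hf hfj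
    obtain ⟨i, hij, hfi⟩ := mem_cycleUnion.mp hf
    by_cases hfe : f = e i
    · subst hfe
      exact horder (hij.lt_of_ne fun h => hfj (congrArg e h))
    · exact (hcycle (e i) f ((heT _).mpr ⟨i, rfl⟩) hfi hfe).trans_le (horder.monotone hij)
  · refine fun hrec => ⟨fun g f hg hf hfg => ?_, fun i j hij => ?_⟩
    · obtain ⟨j, rfl⟩ := (heT g).mp hg
      exact hrec j f (mem_cycleUnion.mpr ⟨j, le_rfl, hf⟩) hfg
    · exact hrec j (e i) (monotone_cycleUnion T e hij.le (mem_cycleUnion_self T e i))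
        (he.ne hij.ne)

theorem measureReal_mstEvent_inter_orderEvent (hT : IsSpanningTree G T)
    (he : Function.Injective e) (heT : ∀ g : G.edgeSet, (g : Sym2 V) ∉ T ↔ g ∈ Set.range e) :
    (edgeUniform G.edgeSet).real (mstEvent G T ∩ orderEvent G fun i => (e i : Sym2 V))
      = ∏ j, 1 / ((⋃ i, ⋃ (_ : i ≤ j), brokenCycle T (e i : Sym2 V)).ncard : ℝ) := by
  rw [mstEvent_inter_orderEvent hT he heT, measureReal_recordEvent (monotone_cycleUnion T e)
    (mem_cycleUnion_self T e)
    (notMem_cycleUnion_of_lt hT he fun j => (heT _).mpr (Set.mem_range_self j))]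
  simp only [card_cycleUnion hT]

/-- The inclusion of the edges outside `T` into the edges of `G`. -/
def nonTreeEdge (a : ↥(G.edgeFinset \ T)) : G.edgeSet :=
  ⟨a, mem_edgeFinset.mp (Finset.mem_sdiff.mp a.2).1⟩

lemma nonTreeEdge_injective : Function.Injective (nonTreeEdge (G := G) (T := T)) :=
  fun _ _ h => Subtype.ext (congrArg (fun g : G.edgeSet => (g : Sym2 V)) h)

lemma notMem_iff_mem_range_nonTreeEdge (π : Fin k ≃ ↥(G.edgeFinset \ T)) (g : G.edgeSet) :
    (g : Sym2 V) ∉ T ↔ g ∈ Set.range (nonTreeEdge ∘ π) := by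
  rw [π.surjective.range_comp]
  constructor
  · exact fun hg => ⟨⟨g, Finset.mem_sdiff.mpr ⟨mem_edgeFinset.mpr g.2, hg⟩⟩, rfl⟩
  · rintro ⟨a, rfl⟩
    exact (Finset.mem_sdiff.mp a.2).2

lemma ae_existsUnique_mem_orderEvent (hk : k = (G.edgeFinset \ T).card) :
    ∀ᵐ w ∂edgeUniform G.edgeSet, ∃! π : Fin k ≃ ↥(G.edgeFinset \ T),
      w ∈ orderEvent G fun i => (π i : Sym2 V) := by
  filter_upwards [ae_injective_pi_s3 fun _ : G.edgeSet => (volume : Measure ℝ).restrict (Set.Icc 0 1)]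
    with w hw
  exact (existsUnique_congr fun π : Fin k ≃ _ => mem_orderEvent_iff (e := nonTreeEdge ∘ π)).mpr <|
    existsUnique_equiv_strictMono_comp (hw.comp nonTreeEdge_injective)
      ((Fintype.card_coe _).trans hk.symm)

lemma mstProb_eq_sum (hk : k = (G.edgeFinset \ T).card) :
    mstProb G T = ∑ π : Fin k ≃ ↥(G.edgeFinset \ T),
      (edgeUniform G.edgeSet).real (mstEvent G T ∩ orderEvent G fun i => (π i : Sym2 V)) :=
  (sum_measureReal_inter_eq_of_ae_existsUnique
    (fun π : Fin k ≃ ↥(G.edgeFinset \ T) => measurableSet_orderEvent (nonTreeEdge ∘ π))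
    (ae_existsUnique_mem_orderEvent hk) (mstEvent G T)).symm

end Orderings

/-- The external (reverse-delete) formula: for a spanning tree `T` of a finite connected
graph `G` and any ordering `π` of the non-tree edges, the probability that `T` is the
unique MST with the non-tree weights in order `π` equals `∏_j 1/|D_j|`, where
`D_j` is the union of the broken cycles of the first `j` non-tree edges; summing over
all orderings gives `P_MST(T; G)`. -/
theorem external_formula [Fintype V] (G : SimpleGraph V) (hG : G.Connected)
    (T : Finset (Sym2 V)) (hT : IsSpanningTree G T)
    (k : ℕ) (hk : k = (G.edgeFinset \ T).card) :
    (∀ π : Fin k ≃ ↥(G.edgeFinset \ T),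
      (edgeUniform G.edgeSet
          (mstEvent G T ∩ orderEvent G fun i => (π i).1)).toReal
        = ∏ j : Fin k,
            1 / ((⋃ i, ⋃ (_ : i ≤ j), brokenCycle T (π i).1).ncard : ℝ)) ∧
    mstProb G T = ∑ π : Fin k ≃ ↥(G.edgeFinset \ T), ∏ j : Fin k,
      1 / ((⋃ i, ⋃ (_ : i ≤ j), brokenCycle T (π i).1).ncard : ℝ) := by
  have hprob (π : Fin k ≃ ↥(G.edgeFinset \ T)) :
      (edgeUniform G.edgeSet).real (mstEvent G T ∩ orderEvent G fun i => (π i).1)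
        = ∏ j : Fin k, 1 / ((⋃ i, ⋃ (_ : i ≤ j), brokenCycle T (π i).1).ncard : ℝ) :=
    measureReal_mstEvent_inter_orderEvent hT (nonTreeEdge_injective.comp π.injective)
      (notMem_iff_mem_range_nonTreeEdge π)
  exact ⟨hprob, (mstProb_eq_sum hk).trans (Finset.sum_congr rfl fun π _ => hprob π)⟩

end RST
end
end

section
/- Let n ≥ 2 and let T⋆ be a spanning tree of the complete graph K_n consisting of all n−1 edges incident to one fixed vertex (a star). Then P_MST(T⋆; K_n) = 1/(2n−3)!!, where (2k−1)!! denotes the product (2k−1)(2k−3)⋯3·1. -/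
open MeasureTheory SimpleGraph
open scoped Classical

noncomputable section

namespace RST

variable {V : Type*}

/-!
Write `x u` for the weight of the star edge at the leaf `u`. The star is the minimum spanning tree
exactly when every edge `ab` between two leaves outweighs both star edges at `a` and at `b`:
exchanging one edge shows necessity, and sufficiency follows by orienting a competing tree towards
the centre, so that its edges are matched with the leaves. Given the star weights, this has
probability `∏ (1 - max (x a) (x b))` over the pairs of leaves. To integrate this, peel off the leaf
with the smallest star weight `t`: each edge from it to another leaf `u` contributes `1 - x u`.
Iterating leads to the integrals over `[s, 1]^m` of the same product multiplied by
`∏ u, (1 - x u) ^ k`. Each is a constant `c m k` times a power of `1 - s`, where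
`c (m + 1) k = 2 / (2 * k + m + 2) * c m (k + 1)`, and `c m 0` telescopes to `1 / (2m - 1)!!`.
-/

lemma spanGraph_adj {T : Finset (Sym2 V)} {a b : V} :
    (spanGraph T).Adj a b ↔ s(a, b) ∈ T ∧ a ≠ b := by
  simp [spanGraph]

lemma edgeSet_spanGraph {G : SimpleGraph V} {T : Finset (Sym2 V)} (hT : ↑T ⊆ G.edgeSet) :
    (spanGraph T).edgeSet = T := by
  rw [spanGraph, edgeSet_fromEdgeSet, sdiff_eq_left]
  exact Set.disjoint_left.2 fun e he => G.not_isDiag_of_mem_edgeSet (hT he)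

lemma treeWeight_restrict [Fintype V] {G : SimpleGraph V} {T : Finset (Sym2 V)}
    (hT : ↑T ⊆ G.edgeSet) (W : Sym2 V → ℝ) :
    treeWeight G (fun e => W e) T = ∑ e ∈ T, W e := by
  rw [treeWeight, ← Finset.sum_filter]
  exact Finset.sum_bij (fun e _ => e) (by simp) (by simp [Subtype.ext_iff])
    (fun e he => ⟨⟨e, hT he⟩, by simpa using he, rfl⟩) (fun _ _ => rfl)

lemma isSpanningTree_iff_card [Finite V] {G : SimpleGraph V} {T : Finset (Sym2 V)} :
    IsSpanningTree G T ↔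
      ↑T ⊆ G.edgeSet ∧ (spanGraph T).Connected ∧ T.card + 1 = Nat.card V := by
  refine and_congr_right fun hT => ?_
  rw [← isTree_iff, isTree_iff_connected_and_card, edgeSet_spanGraph hT]
  simp

section Parent

variable {H : SimpleGraph V}

lemma exists_adj_dist_lt (hH : H.Connected) {u v : V} (huv : u ≠ v) :
    ∃ u', H.Adj u u' ∧ H.dist u' v < H.dist u v := by
  obtain ⟨p, hp⟩ := hH.exists_walk_length_eq_dist u v
  cases p with
  | nil => exact absurd rfl huv
  | cons hadj q => exact ⟨_, hadj, by simpa [← hp, Nat.lt_succ_iff] using dist_le q⟩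

lemma exists_parent (hH : H.Connected) (v : V) :
    ∃ f : V → V, (∀ u ≠ v, H.Adj u (f u)) ∧ Set.InjOn (fun u => s(u, f u)) {v}ᶜ := by
  have hcloser : ∀ u, ∃ u', u ≠ v → H.Adj u u' ∧ H.dist u' v < H.dist u v := fun u => by
    by_cases huv : u = v
    · exact ⟨u, fun h => absurd huv h⟩
    · exact (exists_adj_dist_lt hH huv).imp fun _ h _ => h
  choose f hf using hcloser
  refine ⟨f, fun u hu => (hf u hu).1, fun a ha b hb hab => ?_⟩
  rcases Sym2.eq_iff.1 hab with ⟨h, -⟩ | ⟨hafb, hfab⟩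
  · exact h
  · have hlt_a := (hf a ha).2
    have hlt_b := (hf b hb).2
    rw [hfab] at hlt_a
    rw [← hafb] at hlt_b
    exact absurd hlt_a hlt_b.asymm

lemma IsSpanningTree.exists_eq_image_parent [Fintype V] {G : SimpleGraph V}
    {T : Finset (Sym2 V)} (hT : IsSpanningTree G T) (v : V) :
    ∃ f : V → V, Set.InjOn (fun u => s(u, f u)) {v}ᶜ ∧
      T = ({v}ᶜ : Finset V).image fun u => s(u, f u) := by
  obtain ⟨-, hconn, hcard⟩ := isSpanningTree_iff_card.1 hT
  obtain ⟨f, hadj, hinj⟩ := exists_parent hconn v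
  have hsub : (({v}ᶜ : Finset V).image fun u => s(u, f u)) ⊆ T :=
    Finset.image_subset_iff.2 fun u hu => (spanGraph_adj.1 (hadj u (by simpa using hu))).1
  refine ⟨f, hinj, (Finset.eq_of_subset_of_card_le hsub ?_).symm⟩
  rw [Finset.card_image_of_injOn (by simpa using hinj), Finset.card_compl,
    Finset.card_singleton, ← Nat.card_eq_fintype_card]
  omega

end Parent

section Star

variable [Fintype V] {G : SimpleGraph V} {v : V}

/-- The edge set `T⋆` of the star centred at `v`, parametrised by the leaves so that sums over it
become sums over the vertices other than `v`. -/
def starEdges (v : V) : Finset (Sym2 V) :=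
  ({v}ᶜ : Finset V).image fun u => s(v, u)

lemma mem_starEdges {a b : V} : s(a, b) ∈ starEdges v ↔ a ≠ b ∧ (a = v ∨ b = v) := by
  simp only [starEdges, Finset.mem_image, Finset.mem_compl, Finset.mem_singleton, Sym2.eq_iff]
  constructor
  · rintro ⟨u, hu, ⟨rfl, rfl⟩ | ⟨rfl, rfl⟩⟩ <;> simp [hu, Ne.symm hu]
  · rintro ⟨hab, rfl | rfl⟩
    · exact ⟨b, hab.symm, .inl ⟨rfl, rfl⟩⟩
    · exact ⟨a, hab, .inr ⟨rfl, rfl⟩⟩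

lemma spanGraph_starEdges : spanGraph (starEdges v) = starGraph v := by
  ext a b
  rw [spanGraph_adj, mem_starEdges, starGraph_adj]
  tauto

lemma sum_starEdges (W : Sym2 V → ℝ) : ∑ e ∈ starEdges v, W e = ∑ u ∈ {v}ᶜ, W s(v, u) :=
  Finset.sum_image fun _ _ _ _ h => Sym2.congr_right.1 h

lemma starEdges_subset (hv : G.IsUniversal v) : ↑(starEdges v) ⊆ G.edgeSet := by
  simp only [starEdges, Finset.coe_image, Set.image_subset_iff]
  exact fun u hu => hv (by simpa [eq_comm] using hu)

lemma isSpanningTree_starEdges (hv : G.IsUniversal v) : IsSpanningTree G (starEdges v) := by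
  rw [IsSpanningTree, ← isTree_iff, spanGraph_starEdges]
  exact ⟨starEdges_subset hv, isTree_starGraph v⟩

lemma isSpanningTree_insert_erase_starEdges (hv : G.IsUniversal v) {a b : V} (hab : G.Adj a b)
    (ha : a ≠ v) (hb : b ≠ v) :
    IsSpanningTree G (insert s(a, b) ((starEdges v).erase s(v, a))) := by
  set T := insert s(a, b) ((starEdges v).erase s(v, a)) with hT
  have hreach : ∀ u, (spanGraph T).Reachable v u := by
    have hleaf : ∀ u ≠ a, (spanGraph T).Reachable v u := fun u hua => by
      rcases eq_or_ne u v with rfl | huv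
      · rfl
      · have hmem : s(v, u) ∈ T := by simp [hT, mem_starEdges, hua, huv, huv.symm]
        exact Adj.reachable (spanGraph_adj.2 ⟨hmem, huv.symm⟩)
    intro u
    rcases eq_or_ne u a with rfl | hua
    · exact (hleaf b hab.ne').trans
        (Adj.reachable (spanGraph_adj.2 ⟨by simp [hT, Sym2.eq_swap], hab.ne'⟩))
    · exact hleaf u hua
  refine isSpanningTree_iff_card.2
    ⟨?_, (connected_iff_exists_forall_reachable _).2 ⟨v, hreach⟩, ?_⟩
  · rw [hT, Finset.coe_insert, Set.insert_subset_iff]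
    exact ⟨hab, (Finset.coe_subset.2 (Finset.erase_subset _ _)).trans (starEdges_subset hv)⟩
  · rw [hT, Finset.card_insert_of_notMem (by simp [mem_starEdges, ha, hb]),
      Finset.card_erase_add_one (by simp [mem_starEdges, ha.symm])]
    exact (isSpanningTree_iff_card.1 (isSpanningTree_starEdges hv)).2.2

variable {W : Sym2 V → ℝ}

lemma lt_of_restrict_mem_mstEvent (hv : G.IsUniversal v)
    (hW : (fun e : G.edgeSet => W e) ∈ mstEvent G (starEdges v)) {a b : V} (hab : G.Adj a b)
    (ha : a ≠ v) (hb : b ≠ v) : W s(v, a) < W s(a, b) := by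
  have hmem : s(v, a) ∈ starEdges v := by simp [mem_starEdges, ha.symm]
  have hnotMem : s(a, b) ∉ starEdges v := by simp [mem_starEdges, ha, hb]
  have hswap := isSpanningTree_insert_erase_starEdges hv hab ha hb
  have hlt := hW.2 _ hswap fun h => hnotMem (h ▸ Finset.mem_insert_self _ _)
  rw [treeWeight_restrict (starEdges_subset hv), treeWeight_restrict hswap.1,
    Finset.sum_insert (mt Finset.mem_of_mem_erase hnotMem),
    ← Finset.add_sum_erase _ _ hmem] at hlt
  exact lt_of_add_lt_add_right hlt

/-- Orienting a competing tree towards `v`, the edge from `u` to its parent is compared with the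
star edge of `u`. -/
lemma sum_starEdges_lt (hW : ∀ ⦃a b⦄, G.Adj a b → a ≠ v → b ≠ v → W s(v, a) < W s(a, b))
    {T : Finset (Sym2 V)} (hT : IsSpanningTree G T) (hne : T ≠ starEdges v) :
    ∑ e ∈ starEdges v, W e < ∑ e ∈ T, W e := by
  obtain ⟨f, hinj, rfl⟩ := hT.exists_eq_image_parent v
  have hadj : ∀ u ∈ ({v}ᶜ : Finset V), G.Adj u (f u) := fun u hu =>
    hT.1 (Finset.mem_coe.2 (Finset.mem_image_of_mem _ hu))
  have hlt : ∀ u ∈ ({v}ᶜ : Finset V), f u ≠ v → W s(v, u) < W s(u, f u) := fun u hu =>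
    hW (hadj u hu) (by simpa using hu)
  rw [sum_starEdges, Finset.sum_image (by simpa using hinj)]
  refine Finset.sum_lt_sum (fun u hu => ?_) ?_
  · rcases eq_or_ne (f u) v with hfu | hfu
    · rw [hfu, Sym2.eq_swap]
    · exact (hlt u hu hfu).le
  · by_contra! hge
    have hparent : ∀ u ∈ ({v}ᶜ : Finset V), f u = v := fun u hu =>
      of_not_not fun hfu => (hge u hu).not_gt (hlt u hu hfu)
    exact hne (Finset.image_congr fun u hu => by simp [hparent u hu, Sym2.eq_swap])

lemma restrict_mem_mstEvent_starEdges_iff (hv : G.IsUniversal v) :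
    (fun e : G.edgeSet => W e) ∈ mstEvent G (starEdges v) ↔
      ∀ ⦃a b⦄, G.Adj a b → a ≠ v → b ≠ v → W s(v, a) < W s(a, b) := by
  refine ⟨fun h a b => lt_of_restrict_mem_mstEvent hv h, fun h =>
    ⟨isSpanningTree_starEdges hv, fun T hT hne => ?_⟩⟩
  rw [treeWeight_restrict (starEdges_subset hv), treeWeight_restrict hT.1]
  exact sum_starEdges_lt h hT hne

end Star

section StrictMin

variable {X : Type*} [LinearOrder X] {n : ℕ}

/-- The set of vectors whose smallest coordinate is attained at `p` and nowhere else. -/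
def strictMinAt (p : Fin (n + 1)) : Set (Fin (n + 1) → X) :=
  {x | ∀ j, x p < x (p.succAbove j)}

lemma insertNth_mem_strictMinAt {p : Fin (n + 1)} {t : X} {y : Fin n → X} :
    (p.insertNth t y : Fin (n + 1) → X) ∈ strictMinAt p ↔ y ∈ Set.univ.pi fun _ => Set.Ioi t := by
  simp [strictMinAt]

lemma pairwise_disjoint_strictMinAt :
    Pairwise (Function.onFun Disjoint (strictMinAt (X := X) (n := n))) := by
  refine fun p q hpq => Set.disjoint_left.2 fun x hp hq => ?_
  obtain ⟨i, rfl⟩ := Fin.exists_succAbove_eq hpq.symm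
  obtain ⟨j, hj⟩ := Fin.exists_succAbove_eq hpq
  have hlt := hq j
  rw [hj] at hlt
  exact (hp i).asymm hlt

end StrictMin

section ProductMeasure

variable {α β E X : Type*} [Fintype α] [Fintype β] [Fintype E] [MeasurableSpace X]
  (μ : Measure X) [SigmaFinite μ]

lemma pi_apply_eq_prod_apply (φ : α ⊕ β ≃ E) (S : Set (E → X)) :
    Measure.pi (fun _ => μ) S =
      (Measure.pi fun _ : α => μ).prod (Measure.pi fun _ : β => μ)
        {q | Sum.elim q.1 q.2 ∘ φ.symm ∈ S} := by
  have hsplit := (measurePreserving_sumPiEquivProdPi_symm fun _ : α ⊕ β => μ).trans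
    (measurePreserving_arrowCongr' (fun _ => μ) (fun _ => μ) φ (.refl X) fun _ => .id μ)
  exact (hsplit.measure_preimage_equiv S).symm

lemma ae_pi_apply_ne_apply [MeasurableEq X] [NullSingletonClass μ] {n : ℕ} {i j : Fin (n + 1)}
    (hij : i ≠ j) : ∀ᵐ x ∂Measure.pi fun _ : Fin (n + 1) => μ, x i ≠ x j := by
  obtain ⟨k, rfl⟩ := Fin.exists_succAbove_eq hij.symm
  have hmeas : MeasurableSet {z : X × (Fin n → X) | z.1 ≠ z.2 k} :=
    (measurableSet_eq_fun measurable_fst (by fun_prop)).compl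
  have hne : ∀ᵐ z ∂μ.prod (Measure.pi fun _ : Fin n => μ), z.1 ≠ z.2 k :=
    (Measure.ae_prod_iff_ae_ae hmeas).2 <| .of_forall fun t =>
      (Measure.quasiMeasurePreserving_eval (fun _ => μ) k).ae <|
        (Measure.ae_ne μ t).mono fun _ => Ne.symm
  exact (measurePreserving_piFinSuccAbove (fun _ => μ) i).quasiMeasurePreserving.ae hne

variable [LinearOrder X] [TopologicalSpace X] [OrderClosedTopology X]
  [SecondCountableTopology X] [OpensMeasurableSpace X] {n : ℕ}

lemma measurableSet_strictMinAt (p : Fin (n + 1)) :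
    MeasurableSet (strictMinAt (X := X) p) := by
  rw [strictMinAt, Set.ofPred_forall]
  exact .iInter fun j => measurableSet_lt (by fun_prop) (by fun_prop)

lemma iUnion_strictMinAt_ae_eq_univ [NullSingletonClass μ] :
    ⋃ p, strictMinAt p =ᵐ[Measure.pi fun _ : Fin (n + 1) => μ] Set.univ := by
  have hinj : ∀ᵐ x ∂Measure.pi fun _ : Fin (n + 1) => μ, ∀ i j, i ≠ j → x i ≠ x j := by
    simp only [ae_all_iff]
    exact fun i j => ae_pi_apply_ne_apply μ
  refine Filter.eventuallyEq_univ.2 (hinj.mono fun x hx => ?_)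
  obtain ⟨p, hp⟩ := Finite.exists_min x
  exact Set.mem_iUnion.2 ⟨p, fun j => (hp _).lt_of_ne (hx _ _ (p.succAbove_ne j).symm)⟩

lemma setLIntegral_strictMinAt (p : Fin (n + 1)) {f : (Fin (n + 1) → X) → ENNReal}
    (hf : Measurable f) :
    ∫⁻ x in strictMinAt p, f x ∂Measure.pi (fun _ => μ) =
      ∫⁻ t, ∫⁻ y, f (p.insertNth t y)
        ∂Measure.pi (fun _ : Fin n => μ.restrict (Set.Ioi t)) ∂μ := by
  have hinsert := (measurePreserving_piFinSuccAbove (fun _ : Fin (n + 1) => μ) p).symm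
  have hmeas := measurableSet_strictMinAt (X := X) p
  rw [← lintegral_indicator hmeas, ← hinsert.lintegral_comp (hf.indicator hmeas),
    lintegral_prod _ ((hf.indicator hmeas).fun_comp hinsert.measurable).aemeasurable]
  refine lintegral_congr fun t => ?_
  rw [← Measure.restrict_pi_pi, ← lintegral_indicator (.univ_pi fun _ => measurableSet_Ioi)]
  refine lintegral_congr fun y => ?_
  rw [Set.indicator_apply, Set.indicator_apply]
  exact if_congr insertNth_mem_strictMinAt rfl rfl

/-- Integrate separately over the position `p` and the value `t` of the smallest coordinate, the
others being then restricted to `(t, ∞)`; ties have measure zero. -/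
lemma lintegral_pi_eq_sum_insertNth [NullSingletonClass μ] {f : (Fin (n + 1) → X) → ENNReal}
    (hf : Measurable f) :
    ∫⁻ x, f x ∂Measure.pi (fun _ => μ) =
      ∑ p : Fin (n + 1), ∫⁻ t, ∫⁻ y, f (p.insertNth t y)
        ∂Measure.pi (fun _ : Fin n => μ.restrict (Set.Ioi t)) ∂μ := by
  rw [← setLIntegral_univ, ← setLIntegral_congr (iUnion_strictMinAt_ae_eq_univ μ),
    lintegral_iUnion measurableSet_strictMinAt pairwise_disjoint_strictMinAt, tsum_fintype]
  exact Finset.sum_congr rfl fun p _ => setLIntegral_strictMinAt μ p hf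

lemma measure_prod_pi_forall_lt {Ω : Type*} [MeasurableSpace Ω] (P : Measure Ω)
    {g : β → Ω → X} (hg : ∀ b, Measurable (g b)) :
    P.prod (Measure.pi fun _ => μ) {q | ∀ b, g b q.1 < q.2 b} =
      ∫⁻ ω, ∏ b, μ (Set.Ioi (g b ω)) ∂P := by
  have hmeas : MeasurableSet {q : Ω × (β → X) | ∀ b, g b q.1 < q.2 b} := by
    rw [Set.ofPred_forall]
    exact .iInter fun b => measurableSet_lt (by fun_prop) (by fun_prop)
  rw [Measure.prod_apply hmeas]
  refine lintegral_congr fun ω => ?_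
  rw [← Measure.pi_pi]
  congr 1
  ext y
  simp

end ProductMeasure

section Uniform

lemma edgeUniform_eq_pi_Ioc (E : Type*) [Fintype E] :
    edgeUniform E = Measure.pi fun _ => (volume : Measure ℝ).restrict (Set.Ioc 0 1) := by
  simp_rw [edgeUniform, restrict_Ioc_eq_restrict_Icc]

lemma mstProb_eq_prod [Fintype V] {G : SimpleGraph V} {α β : Type*} [Fintype α] [Fintype β]
    (φ : α ⊕ β ≃ G.edgeSet) (T : Finset (Sym2 V)) :
    mstProb G T = ((edgeUniform α).prod (edgeUniform β)
      {q | Sum.elim q.1 q.2 ∘ φ.symm ∈ mstEvent G T}).toReal := by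
  rw [mstProb, edgeUniform, pi_apply_eq_prod_apply _ φ, edgeUniform, edgeUniform]

lemma restrict_Ioc_restrict_Ioi {s t : ℝ} (hst : s ≤ t) :
    ((volume : Measure ℝ).restrict (Set.Ioc s 1)).restrict (Set.Ioi t) =
      volume.restrict (Set.Ioc t 1) := by
  rw [Measure.restrict_restrict measurableSet_Ioi, Set.inter_comm, Set.Ioc_inter_Ioi,
    max_eq_right hst]

lemma restrict_Ioc_apply_Ioi {s t : ℝ} (hst : s ≤ t) :
    (volume : Measure ℝ).restrict (Set.Ioc s 1) (Set.Ioi t) = ENNReal.ofReal (1 - t) := by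
  rw [Measure.restrict_apply measurableSet_Ioi, Set.inter_comm, Set.Ioc_inter_Ioi,
    max_eq_right hst, Real.volume_Ioc]

lemma ae_pi_Ioc_lt {ι : Type*} [Fintype ι] {s : ℝ} :
    ∀ᵐ x ∂Measure.pi fun _ : ι => (volume : Measure ℝ).restrict (Set.Ioc s 1), ∀ i, s < x i :=
  ae_all_iff.2 fun i => (Measure.quasiMeasurePreserving_eval _ i).ae <|
    (ae_restrict_mem measurableSet_Ioc).mono fun _ => And.left

lemma lintegral_Ioc_one_sub_pow {s : ℝ} (hs : s ≤ 1) (e : ℕ) :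
    ∫⁻ t in Set.Ioc s 1, ENNReal.ofReal (1 - t) ^ e =
      ENNReal.ofReal (1 / (e + 1)) * ENNReal.ofReal (1 - s) ^ (e + 1) := by
  have hpow : ∀ t ∈ Set.Ioc s 1, ENNReal.ofReal (1 - t) ^ e = ENNReal.ofReal ((1 - t) ^ e) :=
    fun t ht => (ENNReal.ofReal_pow (sub_nonneg.2 ht.2) e).symm
  have hnonneg : ∀ᵐ t ∂volume.restrict (Set.Ioc s 1), 0 ≤ (1 - t) ^ e :=
    (ae_restrict_mem measurableSet_Ioc).mono fun t ht => pow_nonneg (sub_nonneg.2 ht.2) e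
  have hint : ∫ t in s..1, (1 - t) ^ e = 1 / (e + 1) * (1 - s) ^ (e + 1) := by
    rw [intervalIntegral.integral_comp_sub_left (fun t => t ^ e) 1, integral_pow, sub_self,
      zero_pow e.succ_ne_zero]
    ring
  rw [setLIntegral_congr_fun measurableSet_Ioc hpow, ← ofReal_integral_eq_lintegral_ofReal
      (Continuous.integrableOn_Ioc (by fun_prop)) hnonneg,
    ← intervalIntegral.integral_of_le hs, hint, ENNReal.ofReal_mul (by positivity),
    ENNReal.ofReal_pow (sub_nonneg.2 hs)]

end Uniform

section StarSplit

lemma bijective_sumElim_mapEdgeSet {m : ℕ} (v : Fin (m + 1)) :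
    Function.Bijective (Sum.elim
      (fun i => (⟨s(v, v.succAbove i), v.ne_succAbove i⟩ : (⊤ : SimpleGraph (Fin (m + 1))).edgeSet))
      (Embedding.completeGraph v.succAboveEmb).mapEdgeSet) := by
  constructor
  · refine .sumElim (fun i j hij => ?_) (Function.Embedding.injective _) fun i e h => ?_
    · exact Fin.succAbove_right_injective (Sym2.congr_right.1 (Subtype.ext_iff.1 hij))
    · have hedge : s(v, v.succAbove i) = (e : Sym2 (Fin m)).map v.succAbove := Subtype.ext_iff.1 h
      have hmem : v ∈ (e : Sym2 (Fin m)).map v.succAbove := hedge ▸ Sym2.mem_mk_left v _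
      obtain ⟨k, -, hk⟩ := Sym2.mem_map.1 hmem
      exact v.succAbove_ne k hk
  · rintro ⟨e, he⟩
    induction e with
    | _ a b =>
      have hab : a ≠ b := he
      rcases Fin.eq_self_or_eq_succAbove v a with rfl | ⟨i, rfl⟩
      · obtain ⟨j, rfl⟩ := Fin.exists_succAbove_eq hab.symm
        exact ⟨.inl j, rfl⟩
      · rcases Fin.eq_self_or_eq_succAbove v b with rfl | ⟨j, rfl⟩
        · exact ⟨.inl i, Subtype.ext Sym2.eq_swap⟩
        · exact ⟨.inr ⟨s(i, j), fun hij => hab (congrArg _ hij)⟩, rfl⟩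

/-- The edges of `K_{m+1}` are the `m` star edges at `v` together with the edges of the copy of
`K_m` on the remaining vertices, which `v.succAbove` enumerates. -/
def starSplit {m : ℕ} (v : Fin (m + 1)) :
    Fin m ⊕ (⊤ : SimpleGraph (Fin m)).edgeSet ≃ (⊤ : SimpleGraph (Fin (m + 1))).edgeSet :=
  .ofBijective _ (bijective_sumElim_mapEdgeSet v)

lemma coe_starSplit_inl {m : ℕ} (v : Fin (m + 1)) (i : Fin m) :
    (starSplit v (.inl i) : Sym2 (Fin (m + 1))) = s(v, v.succAbove i) := rfl

lemma coe_starSplit_inr {m : ℕ} (v : Fin (m + 1)) (e : (⊤ : SimpleGraph (Fin m)).edgeSet) :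
    (starSplit v (.inr e) : Sym2 (Fin (m + 1))) = (e : Sym2 (Fin m)).map v.succAbove := rfl

end StarSplit

section TiltedProb

variable {m : ℕ}

/-- The conditional probability, given the star weights `x` of `m` leaves, that every edge joining
two of these leaves, or one of them to one of `a` further leaves of smaller star weight, outweighs
the star edges of its two ends. -/
def tiltedProb (a : ℕ) (x : Fin m → ℝ) : ENNReal :=
  (∏ i, ENNReal.ofReal (1 - x i) ^ a) *
    ∏ e : (⊤ : SimpleGraph (Fin m)).edgeSet, ENNReal.ofReal (1 - ((e : Sym2 (Fin m)).map x).sup)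

lemma measurable_sup_map {ι : Type*} (e : Sym2 ι) :
    Measurable fun x : ι → ℝ => (e.map x).sup := by
  induction e with
  | _ i j => simp only [Sym2.map_mk, Sym2.sup_mk]; fun_prop

lemma measurable_tiltedProb (a : ℕ) : Measurable (tiltedProb (m := m) a) := by
  have hsup := measurable_sup_map (ι := Fin m)
  unfold tiltedProb
  fun_prop

lemma tiltedProb_insertNth (a : ℕ) (p : Fin (m + 1)) {t : ℝ} {y : Fin m → ℝ}
    (hy : ∀ j, t ≤ y j) :
    tiltedProb a (p.insertNth t y : Fin (m + 1) → ℝ) =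
      ENNReal.ofReal (1 - t) ^ a * tiltedProb (a + 1) y := by
  have hinsert : (p.insertNth t y : Fin (m + 1) → ℝ) ∘ p.succAbove = y :=
    funext fun j => by simp
  rw [tiltedProb, tiltedProb, Fin.prod_univ_succAbove _ p, ← (starSplit p).prod_comp,
    Fintype.prod_sum_type]
  simp only [coe_starSplit_inl, coe_starSplit_inr, Sym2.map_map, hinsert, Sym2.map_mk,
    Sym2.sup_mk, Fin.insertNth_apply_same, Fin.insertNth_apply_succAbove, max_eq_right (hy _),
    pow_succ, Finset.prod_mul_distrib, mul_assoc]

lemma lintegral_tiltedProb_insertNth (a : ℕ) (p : Fin (m + 1)) {s t : ℝ} (hst : s ≤ t) :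
    ∫⁻ y, tiltedProb a (p.insertNth t y : Fin (m + 1) → ℝ)
        ∂Measure.pi (fun _ : Fin m => (volume.restrict (Set.Ioc s 1)).restrict (Set.Ioi t)) =
      ENNReal.ofReal (1 - t) ^ a * ∫⁻ y, tiltedProb (a + 1) y
        ∂Measure.pi (fun _ : Fin m => volume.restrict (Set.Ioc t 1)) := by
  simp_rw [restrict_Ioc_restrict_Ioi hst]
  rw [← lintegral_const_mul _ (measurable_tiltedProb _)]
  exact lintegral_congr_ae <| ae_pi_Ioc_lt.mono fun y hy =>
    tiltedProb_insertNth a p fun j => (hy j).le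

/-- The degree in `1 - s` of the integral of `tiltedProb a` over `(s, 1]^m`: one for each of the
`m` integrations, the `m * a` tilting factors and the edges of `K_m`. -/
def tiltedDegree (m a : ℕ) : ℕ :=
  m * (a + 1) + m.choose 2

lemma tiltedDegree_succ (m a : ℕ) :
    tiltedDegree (m + 1) a = a + tiltedDegree m (a + 1) + 1 := by
  rw [tiltedDegree, tiltedDegree, Nat.choose_succ_succ' m 1, Nat.choose_one_right]
  ring

lemma two_mul_tiltedDegree_succ (m a : ℕ) :
    2 * (tiltedDegree (m + 1) a : ℝ) = (m + 1) * (2 * a + m + 2) := by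
  rw [tiltedDegree]
  push_cast
  rw [Nat.cast_choose_two]
  push_cast
  ring

/-- The mean of `tiltedProb a` under uniform weights on `[0, 1]^m`; written out, it is
`2 ^ m / ((2a + m + 1) ⋯ (2a + 2m))`. -/
def tiltedMean (m a : ℕ) : ℝ :=
  2 ^ m / (2 * a + m + 1).ascFactorial m

lemma tiltedMean_nonneg (m a : ℕ) : 0 ≤ tiltedMean m a := by
  unfold tiltedMean
  positivity

lemma tiltedMean_succ (m a : ℕ) :
    tiltedMean (m + 1) a =
      (m + 1 : ℕ) * (tiltedMean m (a + 1) * (1 / tiltedDegree (m + 1) a)) := by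
  have hasc : (2 * a + (m + 1) + 1).ascFactorial (m + 1) =
      (2 * a + m + 2) * (2 * (a + 1) + m + 1).ascFactorial m := by
    rw [Nat.ascFactorial_succ, ← Nat.succ_ascFactorial]
    grind
  have hdegree : (tiltedDegree (m + 1) a : ℝ) = (m + 1) * (2 * a + m + 2) / 2 := by
    rw [← two_mul_tiltedDegree_succ]
    ring
  have hpos : ((2 * (a + 1) + m + 1).ascFactorial m : ℝ) ≠ 0 := by positivity
  rw [tiltedMean, tiltedMean, hdegree, hasc]
  push_cast
  field_simp
  ring

lemma lintegral_tiltedProb (m a : ℕ) {s : ℝ} (hs : s ≤ 1) :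
    ∫⁻ x, tiltedProb a x ∂Measure.pi (fun _ : Fin m => volume.restrict (Set.Ioc s 1)) =
      ENNReal.ofReal (tiltedMean m a) * ENNReal.ofReal (1 - s) ^ tiltedDegree m a := by
  induction m generalizing a s with
  | zero => simp [tiltedProb, tiltedMean, tiltedDegree, Measure.pi_of_empty _ default]
  | succ m ih =>
    have hpeel : ∀ p : Fin (m + 1), ∀ t ∈ Set.Ioc s 1,
        ∫⁻ y, tiltedProb a (p.insertNth t y : Fin (m + 1) → ℝ) ∂Measure.pi (fun _ : Fin m =>
          (volume.restrict (Set.Ioc s 1)).restrict (Set.Ioi t)) =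
        ENNReal.ofReal (tiltedMean m (a + 1)) *
          ENNReal.ofReal (1 - t) ^ (a + tiltedDegree m (a + 1)) := fun p t ht => by
      rw [lintegral_tiltedProb_insertNth a p ht.1.le, ih _ ht.2, mul_left_comm, ← pow_add]
    rw [lintegral_pi_eq_sum_insertNth _ (measurable_tiltedProb a),
      Finset.sum_congr rfl fun p _ => setLIntegral_congr_fun measurableSet_Ioc (hpeel p),
      lintegral_const_mul _ (by fun_prop), lintegral_Ioc_one_sub_pow hs, ← tiltedDegree_succ,
      ← Nat.cast_add_one, ← tiltedDegree_succ, Finset.sum_const, Finset.card_univ,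
      Fintype.card_fin, nsmul_eq_mul, tiltedMean_succ, ENNReal.ofReal_mul (by positivity),
      ENNReal.ofReal_mul (tiltedMean_nonneg _ _), ENNReal.ofReal_natCast]
    simp only [mul_assoc]

lemma tiltedMean_zero (k : ℕ) :
    tiltedMean (k + 1) 0 = 1 / (Nat.doubleFactorial (2 * k + 1) : ℝ) := by
  have hasc : (k + 2).ascFactorial (k + 1) = 2 ^ (k + 1) * Nat.doubleFactorial (2 * k + 1) := by
    refine Nat.eq_of_mul_eq_mul_left (k + 1).factorial_pos ?_
    rw [Nat.factorial_mul_ascFactorial, show k + 1 + (k + 1) = 2 * k + 1 + 1 by ring,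
      Nat.factorial_eq_mul_doubleFactorial, show 2 * k + 1 + 1 = 2 * (k + 1) by ring,
      Nat.doubleFactorial_two_mul]
    ring
  rw [tiltedMean, mul_zero, zero_add, hasc, Nat.cast_mul, Nat.cast_pow, Nat.cast_ofNat,
    ← div_div, div_self (by positivity)]

end TiltedProb

section StarProbability

variable {m : ℕ}

lemma comp_starSplit_symm_mem_mstEvent_iff (v : Fin (m + 1)) {x : Fin m → ℝ}
    {y : (⊤ : SimpleGraph (Fin m)).edgeSet → ℝ} :
    Sum.elim x y ∘ (starSplit v).symm ∈ mstEvent ⊤ (starEdges v) ↔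
      ∀ e : (⊤ : SimpleGraph (Fin m)).edgeSet, ((e : Sym2 (Fin m)).map x).sup < y e := by
  obtain ⟨W, hW⟩ := Subtype.val_injective.surjective_comp_right (Sum.elim x y ∘ (starSplit v).symm)
  have hx : ∀ i, W s(v, v.succAbove i) = x i := fun i => by
    simpa [coe_starSplit_inl] using congrFun hW (starSplit v (.inl i))
  have hy : ∀ e, W (Sym2.map v.succAbove e.1) = y e := fun e => by
    simpa [coe_starSplit_inr] using congrFun hW (starSplit v (.inr e))
  rw [← hW]
  refine (restrict_mem_mstEvent_starEdges_iff fun _ h => h).trans ⟨?_, ?_⟩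
  · rintro h ⟨e, he⟩
    induction e with
    | _ i j =>
      have hlt : ∀ k l, k ≠ l → x k < W s(v.succAbove k, v.succAbove l) := fun k l hkl => by
        rw [← hx]
        exact h (v.succAbove_right_injective.ne hkl) (v.succAbove_ne k) (v.succAbove_ne l)
      rw [← hy, Sym2.map_mk, Sym2.map_mk, Sym2.sup_mk, max_lt_iff]
      exact ⟨hlt i j he, Sym2.eq_swap ▸ hlt j i (Ne.symm he)⟩
  · intro h a b hab ha hb
    obtain ⟨i, rfl⟩ := Fin.exists_succAbove_eq ha
    obtain ⟨j, rfl⟩ := Fin.exists_succAbove_eq hb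
    have hlt := h ⟨s(i, j), fun hij => hab.ne (congrArg _ hij)⟩
    rw [← hy] at hlt
    rw [hx]
    exact (le_max_left _ _).trans_lt hlt

lemma prod_restrict_Ioc_apply_Ioi {x : Fin m → ℝ} (hx : ∀ i, 0 < x i) :
    ∏ e : (⊤ : SimpleGraph (Fin m)).edgeSet,
        (volume : Measure ℝ).restrict (Set.Ioc 0 1) (Set.Ioi ((e : Sym2 (Fin m)).map x).sup) =
      tiltedProb 0 x := by
  have hsup : ∀ e : Sym2 (Fin m), 0 ≤ (e.map x).sup := fun e => by
    induction e with
    | _ i j => exact (hx i).le.trans (le_max_left _ _)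
  simp [tiltedProb, restrict_Ioc_apply_Ioi (hsup _)]

lemma mstProb_starEdges (v : Fin (m + 1)) : mstProb ⊤ (starEdges v) = tiltedMean m 0 := by
  have hsup := fun e : (⊤ : SimpleGraph (Fin m)).edgeSet => measurable_sup_map (e : Sym2 (Fin m))
  rw [mstProb_eq_prod (starSplit v), edgeUniform_eq_pi_Ioc, edgeUniform_eq_pi_Ioc]
  simp only [comp_starSplit_symm_mem_mstEvent_iff]
  rw [measure_prod_pi_forall_lt _ _ hsup,
    lintegral_congr_ae (ae_pi_Ioc_lt.mono fun x hx => prod_restrict_Ioc_apply_Ioi hx),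
    lintegral_tiltedProb m 0 zero_le_one]
  simp [tiltedMean_nonneg]

end StarProbability

/-- In the complete graph `K_n` (`n ≥ 2`), the star spanning tree `T⋆`, consisting of all
`n - 1` edges incident to a fixed vertex `v`, satisfies `P_MST(T⋆; K_n) = 1/(2n-3)!!`. -/
theorem star_mst_probability (n : ℕ) (hn : 2 ≤ n) (v : Fin n)
    (Tstar : Finset (Sym2 (Fin n)))
    (hstar : Tstar = (⊤ : SimpleGraph (Fin n)).edgeFinset.filter fun e => v ∈ e) :
    mstProb (⊤ : SimpleGraph (Fin n)) Tstar
      = 1 / (Nat.doubleFactorial (2 * n - 3) : ℝ) := by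
  obtain ⟨k, rfl⟩ := Nat.exists_eq_add_of_le' hn
  have hTstar : Tstar = starEdges v := by
    ext e
    induction e with
    | _ a b => simp [hstar, mem_starEdges, eq_comm]
  rw [hTstar, mstProb_starEdges, tiltedMean_zero, show 2 * (k + 2) - 3 = 2 * k + 1 by omega]

end RST
end
end
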